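/- arXiv:2103.08706 — 2 statements merged into one kernel-verified Lean document; each statement's English description precedes it below -/
import Mathlib

section
/- Let γ_t(x) be a C^∞ function on a neighborhood of (0,0) in ℝ^N×ℝ^n with γ_0(x) ≡ x. Then: (i) every element of ℒ(𝒫 ∪ 𝒩) is a finite linear combination with constant coefficients of elements of ℒ(𝒫̂ ∪ 𝒩̂) having the same degree, and every element of ℒ(𝒫) is such a combination of elements of ℒ(𝒫̂); (ii) conversely, every element of ℒ(𝒫̂ ∪ 𝒩̂) is a finite linear combination with constant coefficients of elements of ℒ(𝒫 ∪ 𝒩) having the same degree, and every element of ℒ(𝒫̂) is such a combination of elements of ℒ(𝒫). -/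
open MeasureTheory Metric Filter Set
open scoped ENNReal NNReal Topology

noncomputable section

namespace Zhang

/-- `ℝ^n` with the Euclidean norm. -/
abbrev Euc (n : ℕ) := EuclideanSpace ℝ (Fin n)

/-- Vector fields on `ℝ^n` (as everywhere-defined maps). -/
abbrev VF (n : ℕ) := Euc n → Euc n

/-- `ν`-parameter degrees. -/
abbrev Deg (ν : ℕ) := Fin ν → ℝ

variable {N ν n q : ℕ}

/-- Admissible multi-parameter dilation data `e = {e_1,…,e_N} ⊆ [0,∞)^ν`. -/
def AdmissibleE (e : Fin N → Fin ν → ℝ) : Prop :=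
  (∀ i μ, 0 ≤ e i μ) ∧ (∀ i, ∃ μ, e i μ ≠ 0) ∧ (∀ μ, ∃ i, e i μ ≠ 0)

/-- `δ^d = ∏_μ δ_μ^{d_μ}` (real exponents). -/
def dpow (δ d : Fin ν → ℝ) : ℝ := ∏ μ, δ μ ^ d μ

/-- The multi-parameter dilation `δ t = (δ^{e_1} t_1, …, δ^{e_N} t_N)`. -/
def dilate (e : Fin N → Fin ν → ℝ) (δ : Fin ν → ℝ) (t : Euc N) : Euc N :=
  (EuclideanSpace.equiv (Fin N) ℝ).symm fun i => dpow δ (e i) * t i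

/-- `ς^{(δ)}(t) = δ^{e_1+⋯+e_N} ς(δ t)`. -/
def scaled (e : Fin N → Fin ν → ℝ) (ς : Euc N → ℝ) (δ : Fin ν → ℝ) : Euc N → ℝ :=
  fun t => (∏ i, dpow δ (e i)) * ς (dilate e δ t)

/-- `2^k = (2^{k_1},…,2^{k_ν})`. -/
def twoPow (k : Fin ν → ℕ) : Fin ν → ℝ := fun μ => 2 ^ k μ

/-- The (global) `C^m` supremum norm of a function. -/
def CmSupNorm {E F : Type*} [NormedAddCommGroup E] [NormedSpace ℝ E]
    [NormedAddCommGroup F] [NormedSpace ℝ F] (m : ℕ) (f : E → F) : ℝ :=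
  ∑ j ∈ Finset.range (m + 1), ⨆ t, ‖iteratedFDeriv ℝ j f t‖

/-- The `C^m` supremum norm of a function on a set. -/
def CmSupNormOn {E F : Type*} [NormedAddCommGroup E] [NormedSpace ℝ E]
    [NormedAddCommGroup F] [NormedSpace ℝ F] (m : ℕ) (s : Set E) (f : E → F) : ℝ :=
  ∑ j ∈ Finset.range (m + 1), ⨆ t ∈ s, ‖iteratedFDerivWithin ℝ j f s t‖

/-- The cancellation condition: the integral of `g` in the coordinates `t_i` with
`e_i^μ ≠ 0` vanishes identically as a function of the remaining coordinates. -/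
def CancelCond (e : Fin N → Fin ν → ℝ) (μ : Fin ν) (g : Euc N → ℝ) : Prop :=
  ∀ t : Fin N → ℝ,
    haveI : DecidablePred fun i : Fin N => e i μ ≠ 0 := Classical.decPred _
    (∫ s : {i : Fin N // e i μ ≠ 0} → ℝ,
        g ((EuclideanSpace.equiv (Fin N) ℝ).symm fun i =>
          if h : e i μ ≠ 0 then s ⟨i, h⟩ else t i)) = 0

/-- Kernel data for the class `𝒦(N,e,a,ν)`: a sequence `{ς_k}_{k∈ℕ^ν}` bounded in
`C_c^∞(B^N(a))` satisfying the cancellation conditions. -/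
def IsKernelSeq (e : Fin N → Fin ν → ℝ) (a : ℝ) (ς : (Fin ν → ℕ) → Euc N → ℝ) : Prop :=
  (∀ k, ContDiff ℝ (⊤ : ℕ∞) (ς k)) ∧
  (∀ k, tsupport (ς k) ⊆ ball (0 : Euc N) a) ∧
  (∀ m, ∃ C : ℝ, ∀ k, CmSupNorm m (ς k) ≤ C) ∧
  (∀ k μ, k μ ≠ 0 → CancelCond e μ (ς k))

/-- Membership in the Fréchet space `𝒦̄(N,e,a,ν)` (closed ball support). -/
def MemKbar (e : Fin N → Fin ν → ℝ) (a : ℝ) (ς : (Fin ν → ℕ) → Euc N → ℝ) : Prop :=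
  (∀ k, ContDiff ℝ (⊤ : ℕ∞) (ς k)) ∧
  (∀ k, tsupport (ς k) ⊆ closedBall (0 : Euc N) a) ∧
  (∀ m, ∃ C : ℝ, ∀ k, CmSupNorm m (ς k) ≤ C) ∧
  (∀ k μ, k μ ≠ 0 → CancelCond e μ (ς k))

/-- The seminorm `‖{ς_k}‖_m = sup_k ‖ς_k‖_{C^m}` of `𝒦̄(N,e,a,ν)`. -/
def seqSeminorm (m : ℕ) (ς : (Fin ν → ℕ) → Euc N → ℝ) : ℝ :=
  ⨆ k, CmSupNorm m (ς k)

/-- The multi-indices `k ∈ ℕ^ν` with all coordinates `≤ M`. -/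
def trunc (ν M : ℕ) : Finset (Fin ν → ℕ) :=
  Finset.image (fun k : Fin ν → Fin (M + 1) => fun μ => (k μ : ℕ)) Finset.univ

/-- The partial-sum operators `f ↦ ψ(x) Σ_{|k|≤M} ∫ f(γ_t(x)) ς_k^{(2^k)}(t) dt`. -/
def partialOp (e : Fin N → Fin ν → ℝ) (γ : Euc N → Euc n → Euc n) (ψ : Euc n → ℝ)
    (ς : (Fin ν → ℕ) → Euc N → ℝ) (M : ℕ) (f : Euc n → ℝ) : Euc n → ℝ :=
  fun x => ψ x * ∑ k ∈ trunc ν M, ∫ t : Euc N, f (γ t x) * scaled e (ς k) (twoPow k) t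

/-- `T` is bounded on `L^p`: the partial-sum operators are bounded uniformly in `M`. -/
def OpBounded (p : ℝ) (e : Fin N → Fin ν → ℝ) (γ : Euc N → Euc n → Euc n)
    (ψ : Euc n → ℝ) (ς : (Fin ν → ℕ) → Euc N → ℝ) : Prop :=
  ∃ C : ℝ≥0, ∀ M : ℕ, ∀ f : Euc n → ℝ, ContDiff ℝ (⊤ : ℕ∞) f → HasCompactSupport f →
    eLpNorm (partialOp e γ ψ ς M f) (ENNReal.ofReal p) volume ≤
      C * eLpNorm f (ENNReal.ofReal p) volume

/-- All operators with small `ψ` and small kernels in `𝒦(N,e,a,ν)` are `L^p` bounded. -/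
def AllOpsBounded (p : ℝ) (e : Fin N → Fin ν → ℝ) (γ : Euc N → Euc n → Euc n) : Prop :=
  ∃ ε a : ℝ, 0 < ε ∧ 0 < a ∧
    ∀ ψ : Euc n → ℝ, ContDiff ℝ (⊤ : ℕ∞) ψ → HasCompactSupport ψ →
      tsupport ψ ⊆ ball (0 : Euc n) ε →
      ∀ ς : (Fin ν → ℕ) → Euc N → ℝ, IsKernelSeq e a ς → OpBounded p e γ ψ ς

/-! ### Vector fields, brackets, Carnot–Carathéodory geometry -/

/-- The Lie bracket of two vector fields. -/
def lieBracket (X Y : VF n) : VF n := fun x => fderiv ℝ Y x (X x) - fderiv ℝ X x (Y x)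

/-- `ℒ(S)`: the smallest set of (vector field, degree) pairs containing `S` and
closed under Lie brackets (adding degrees). -/
inductive LieGen (S : Set (VF n × Deg ν)) : VF n × Deg ν → Prop
  | base {P : VF n × Deg ν} : P ∈ S → LieGen S P
  | bracket {X Y : VF n} {d d' : Deg ν} : LieGen S (X, d) → LieGen S (Y, d') →
      LieGen S (lieBracket X Y, d + d')

def lieSpan (S : Set (VF n × Deg ν)) : Set (VF n × Deg ν) := {P | LieGen S P}

def unitCube (ν : ℕ) : Set (Fin ν → ℝ) := {δ | ∀ μ, 0 ≤ δ μ ∧ δ μ ≤ 1}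

def vecConst (ν : ℕ) (ξ : ℝ) : Fin ν → ℝ := fun _ => ξ

/-- `a` is a measurable control with `‖Σ_l |a_l|²‖_{L^∞[0,1]} < 1`. -/
def IsSubunit {ι : Type*} [Fintype ι] (a : ℝ → ι → ℝ) : Prop :=
  (∀ l, Measurable fun s => a s l) ∧
  ∃ c : ℝ, c < 1 ∧ ∀ᵐ s ∂(volume.restrict (Set.Icc (0 : ℝ) 1)), ∑ l, a s l ^ 2 ≤ c

/-- `g` is an absolutely continuous solution of `g' = Σ_l a_l δ^{d_l} X_l(g)`, `g(0)=x`,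
in integral form. -/
def SolvesODE {ι : Type*} [Fintype ι] (X : ι → VF n) (d : ι → Deg ν) (δ : Fin ν → ℝ)
    (a : ℝ → ι → ℝ) (x : Euc n) (g : ℝ → Euc n) : Prop :=
  g 0 = x ∧ ∀ u ∈ Set.Icc (0 : ℝ) 1,
    g u = x + ∫ s in (0 : ℝ)..u, ∑ l, a s l • dpow δ (d l) • X l (g s)

/-- The multi-parameter Carnot–Carathéodory ball `B_{(X,d)}(x,δ)` inside `Ω`. -/
def CCBall {ι : Type*} [Fintype ι] (X : ι → VF n) (d : ι → Deg ν) (Ω : Set (Euc n))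
    (x : Euc n) (δ : Fin ν → ℝ) : Set (Euc n) :=
  {y | ∃ (g : ℝ → Euc n) (a : ℝ → ι → ℝ), IsSubunit a ∧
      (∀ u ∈ Set.Icc (0 : ℝ) 1, g u ∈ Ω) ∧ SolvesODE X d δ a x g ∧ g 1 = y}

/-- `(X,d)` satisfies `𝒞(x,δ,Ω)`. -/
def SatC {ι : Type*} [Fintype ι] (X : ι → VF n) (d : ι → Deg ν) (x : Euc n)
    (δ : Fin ν → ℝ) (Ω : Set (Euc n)) : Prop :=
  ∀ a : ℝ → ι → ℝ, IsSubunit a →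
    ∃ g : ℝ → Euc n, (∀ u ∈ Set.Icc (0 : ℝ) 1, g u ∈ Ω) ∧ SolvesODE X d δ a x g

/-- The derivation of a scalar function along a vector field. -/
def derivAlong (Y : VF n) (f : Euc n → ℝ) : Euc n → ℝ := fun x => fderiv ℝ f x (Y x)

/-- `(δX)^α f`: iterated derivations indexed by the ordered multi-index `α`. -/
def derivList {ι : Type*} (X : ι → VF n) (w : ι → ℝ) (α : List ι) (f : Euc n → ℝ) :
    Euc n → ℝ :=
  α.foldr (fun l g => derivAlong (fun x => w l • X l x) g) f

/-- `(X,d)` controls `(X₀,d₀)` on `U` with parameter `ξ₁` (ambient `Ω`). -/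
def ControlsOn {ι : Type*} [Fintype ι] (X : ι → VF n) (d : ι → Deg ν)
    (Ω U : Set (Euc n)) (ξ₁ : ℝ) (X₀ : VF n) (d₀ : Deg ν) : Prop :=
  (∀ x ∈ U, SatC X d x (vecConst ν ξ₁) Ω) ∧
  ∃ c : Euc n → (Fin ν → ℝ) → ι → Euc n → ℝ,
    (∀ x ∈ U, ∀ δ ∈ unitCube ν, ∀ y ∈ CCBall X d Ω x (fun μ => ξ₁ * δ μ),
      dpow δ d₀ • X₀ y = ∑ l, c x δ l y • dpow δ (d l) • X l y) ∧
    (∀ x ∈ U, ∀ δ ∈ unitCube ν, ∀ l, ∀ α : List ι,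
      ContinuousOn (derivList X (fun l' => dpow δ (d l')) α (c x δ l))
        (CCBall X d Ω x (fun μ => ξ₁ * δ μ))) ∧
    (∀ m : ℕ, ∃ C : ℝ, ∀ x ∈ U, ∀ δ ∈ unitCube ν, ∀ l, ∀ α : List ι, α.length ≤ m →
      ∀ y ∈ CCBall X d Ω x (fun μ => ξ₁ * δ μ),
        |derivList X (fun l' => dpow δ (d l')) α (c x δ l) y| ≤ C)

/-- `(X,d)` controls `(X₀,d₀)` (some `U`, `ξ₁`), ambient `Ω`. -/
def ControlsPair {ι : Type*} [Fintype ι] (X : ι → VF n) (d : ι → Deg ν)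
    (Ω : Set (Euc n)) (X₀ : VF n) (d₀ : Deg ν) : Prop :=
  ∃ (U : Set (Euc n)) (ξ₁ : ℝ), IsOpen U ∧ (0 : Euc n) ∈ U ∧ U ⊆ Ω ∧ 0 < ξ₁ ∧
    ControlsOn X d Ω U ξ₁ X₀ d₀

/-- A finite set of pairs controls a pair (ambient neighborhood existentially quantified). -/
def FinsetControls (F : Finset (VF n × Deg ν)) (P : VF n × Deg ν) : Prop :=
  ∃ Ω : Set (Euc n), IsOpen Ω ∧ (0 : Euc n) ∈ Ω ∧
    ControlsPair (fun l : F => (l : VF n × Deg ν).1) (fun l : F => (l : VF n × Deg ν).2)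
      Ω P.1 P.2

/-- A set `S` of pairs controls a set `T`. -/
def SetControls (S T : Set (VF n × Deg ν)) : Prop :=
  ∃ F : Finset (VF n × Deg ν), ↑F ⊆ S ∧ ∀ P ∈ S ∪ T, FinsetControls F P

/-! ### Degrees, Taylor coefficients, exponential coefficients -/

def degMulti (e : Fin N → Fin ν → ℝ) (α : Fin N → ℕ) : Fin ν → ℝ :=
  fun μ => ∑ i, (α i : ℝ) * e i μ

/-- A degree is pure if it has exactly one nonzero coordinate. -/
def IsPureDeg (dg : Fin ν → ℝ) : Prop := ∃! μ, dg μ ≠ 0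

/-- `t^α`. -/
def monomial (α : Fin N → ℕ) (t : Euc N) : ℝ := ∏ i, t i ^ α i

/-- The multi-indices `α` with `|α| < M`. -/
def multiIdxLt (N M : ℕ) : Finset (Fin N → ℕ) :=
  (trunc N M).filter fun α => ∑ i, α i < M

/-- `X` is the family of Taylor coefficient vector fields of `W` at `t = 0`, on `U`. -/
def IsTaylorFieldOf (W : Euc N → Euc n → Euc n) (U : Set (Euc n))
    (X : (Fin N → ℕ) → VF n) : Prop :=
  X 0 = 0 ∧ (∀ α, ContDiffOn ℝ (⊤ : ℕ∞) (X α) U) ∧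
  ∀ M : ℕ, ∃ C ε : ℝ, 0 < ε ∧ ∀ t ∈ ball (0 : Euc N) ε, ∀ x ∈ U,
    ‖W t x - ∑ α ∈ multiIdxLt N M, monomial α t • X α x‖ ≤ C * ‖t‖ ^ M

/-- `W(t,x) = (d/dε)|_{ε=1} γ_{εt}(γ_t⁻¹(x))` on `B^N(ρ) × U`. -/
def IsWFor (γ : Euc N → Euc n → Euc n) (ρ : ℝ) (U : Set (Euc n))
    (W : Euc N → Euc n → Euc n) : Prop :=
  ∃ γinv : Euc N → Euc n → Euc n,
    (∀ t ∈ ball (0 : Euc N) ρ, ∀ x ∈ U, γ t (γinv t x) = x ∧ γinv t (γ t x) = x) ∧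
    ∀ t ∈ ball (0 : Euc N) ρ, ∀ x ∈ U,
      HasDerivAt (fun ε : ℝ => γ (ε • t) (γinv t x)) (W t x) 1

/-- `y` is the time-one flow of the vector field `V` from `x`. -/
def FlowsTo (V : VF n) (x y : Euc n) : Prop :=
  ∃ φ : ℝ → Euc n, φ 0 = x ∧ φ 1 = y ∧ ∀ s ∈ Set.Icc (0 : ℝ) 1, HasDerivAt φ (V (φ s)) s

/-- `Xh` is the family of exponential coefficient vector fields of `γ`:
`γ_t(x) = e^{Σ_{0<|α|<M} t^α X̂_α} x + O(|t|^M)` for every `M`. -/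
def IsExpFieldsFor (γ : Euc N → Euc n → Euc n) (U : Set (Euc n))
    (Xh : (Fin N → ℕ) → VF n) : Prop :=
  Xh 0 = 0 ∧ (∀ α, ContDiffOn ℝ (⊤ : ℕ∞) (Xh α) U) ∧
  ∀ M : ℕ, ∃ C ε : ℝ, 0 < ε ∧ ∀ t ∈ ball (0 : Euc N) ε, ∀ x ∈ U,
    ∃ y : Euc n, FlowsTo (fun z => ∑ α ∈ multiIdxLt N M, monomial α t • Xh α z) x y ∧
      ‖γ t x - y‖ ≤ C * ‖t‖ ^ M

/-- The pure power set `𝒫` of a family of coefficient fields. -/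
def pureSet (e : Fin N → Fin ν → ℝ) (X : (Fin N → ℕ) → VF n) : Set (VF n × Deg ν) :=
  {P | ∃ α : Fin N → ℕ, α ≠ 0 ∧ IsPureDeg (degMulti e α) ∧ P = (X α, degMulti e α)}

/-- The nonpure power set `𝒩` of a family of coefficient fields. -/
def nonpureSet (e : Fin N → Fin ν → ℝ) (X : (Fin N → ℕ) → VF n) : Set (VF n × Deg ν) :=
  {P | ∃ α : Fin N → ℕ, α ≠ 0 ∧ ¬ IsPureDeg (degMulti e α) ∧ P = (X α, degMulti e α)}

/-! ### Strong control -/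

/-- `(X,d)` strongly controls `(X₀,d₀)`. -/
def StrongControlsOn {ι : Type*} [Fintype ι] (X : ι → VF n) (d : ι → Deg ν)
    (X₀ : VF n) (d₀ : Deg ν) : Prop :=
  ∃ (U V : Set (Euc n)) (c : ι → Euc n → ℝ),
    IsOpen U ∧ (0 : Euc n) ∈ U ∧ IsOpen V ∧ closure U ⊆ V ∧
    (∀ l, ContDiffOn ℝ (⊤ : ℕ∞) (c l) V) ∧
    (∀ l, ¬ (∀ μ, d l μ ≤ d₀ μ) → c l = 0) ∧
    (∀ x ∈ U, X₀ x = ∑ l, c l x • X l x)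

/-- A finite set of pairs strongly controls a pair. -/
def FinsetStrongControls (F : Finset (VF n × Deg ν)) (P : VF n × Deg ν) : Prop :=
  StrongControlsOn (fun l : F => (l : VF n × Deg ν).1) (fun l : F => (l : VF n × Deg ν).2)
    P.1 P.2

/-- `(X,d)` strongly controls `W(t,x)`. -/
def StrongControlsW {ι : Type*} [Fintype ι] (X : ι → VF n) (d : ι → Deg ν)
    (e : Fin N → Fin ν → ℝ) (W : Euc N → Euc n → Euc n) : Prop :=
  ∃ (ρ' : ℝ) (U : Set (Euc n)) (V : Set (Euc N × Euc n)) (A : Finset (Fin N → ℕ))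
    (c : ι → (Fin N → ℕ) → Euc N → Euc n → ℝ),
    0 < ρ' ∧ IsOpen U ∧ (0 : Euc n) ∈ U ∧ IsOpen V ∧
    closure (ball (0 : Euc N) ρ' ×ˢ U) ⊆ V ∧
    (∀ l α, ContDiffOn ℝ (⊤ : ℕ∞) (fun p : Euc N × Euc n => c l α p.1 p.2) V) ∧
    (∀ l α, degMulti e α ≠ d l → c l α = 0) ∧
    (∀ t ∈ ball (0 : Euc N) ρ', ∀ x ∈ U,
      W t x = ∑ l, ∑ α ∈ A, (c l α t x * monomial α t) • X l x)

/-- A finite set of pairs strongly controls `W`. -/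
def FinsetStrongControlsW (F : Finset (VF n × Deg ν)) (e : Fin N → Fin ν → ℝ)
    (W : Euc N → Euc n → Euc n) : Prop :=
  StrongControlsW (fun l : F => (l : VF n × Deg ν).1) (fun l : F => (l : VF n × Deg ν).2)
    e W

/-! ### Control of `W` -/

/-- `∂_{t_i}` applied to a function of `(t,u)`. -/
def derivTAlong (i : Fin N) (f : Euc N → Euc n → ℝ) : Euc N → Euc n → ℝ :=
  fun t u => fderiv ℝ (fun s => f s u) t (EuclideanSpace.single i (1 : ℝ))

/-- Iterated `t`-partials indexed by an ordered multi-index. -/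
def derivTList (β : List (Fin N)) (f : Euc N → Euc n → ℝ) : Euc N → Euc n → ℝ :=
  β.foldr derivTAlong f

/-- Iterated `u`-derivations along scaled vector fields. -/
def derivUList {ι : Type*} (X : ι → VF n) (w : ι → ℝ) (β : List ι)
    (f : Euc N → Euc n → ℝ) : Euc N → Euc n → ℝ :=
  fun t => derivList X w β (f t)

/-- `(X,d)` controls `W` on `U` for `t ∈ B^N(ρ')` with parameter `ξ₁` (ambient `Ω`). -/
def ControlsWOn {ι : Type*} [Fintype ι] (X : ι → VF n) (d : ι → Deg ν)
    (e : Fin N → Fin ν → ℝ) (Ω U : Set (Euc n)) (ρ' ξ₁ : ℝ)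
    (W : Euc N → Euc n → Euc n) : Prop :=
  (∀ x ∈ U, SatC X d x (vecConst ν ξ₁) Ω) ∧
  ∃ c : Euc n → (Fin ν → ℝ) → ι → Euc N → Euc n → ℝ,
    (∀ x ∈ U, ∀ δ ∈ unitCube ν, ∀ t ∈ ball (0 : Euc N) ρ',
      ∀ u ∈ CCBall X d Ω x (fun μ => ξ₁ * δ μ),
        W (dilate e δ t) u = ∑ l, c x δ l t u • dpow δ (d l) • X l u) ∧
    (∀ x ∈ U, ∀ δ ∈ unitCube ν, ∀ l, ∀ β' : List (Fin N), ∀ β : List ι,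
      ContinuousOn
        (fun p : Euc N × Euc n =>
          derivTList β' (derivUList X (fun l' => dpow δ (d l')) β (c x δ l)) p.1 p.2)
        (ball (0 : Euc N) ρ' ×ˢ CCBall X d Ω x (fun μ => ξ₁ * δ μ))) ∧
    (∀ m : ℕ, ∃ C : ℝ, ∀ x ∈ U, ∀ δ ∈ unitCube ν, ∀ l, ∀ β' : List (Fin N), ∀ β : List ι,
      β'.length + β.length ≤ m → ∀ t ∈ ball (0 : Euc N) ρ',
        ∀ u ∈ CCBall X d Ω x (fun μ => ξ₁ * δ μ),
          |derivTList β' (derivUList X (fun l' => dpow δ (d l')) β (c x δ l)) t u| ≤ C)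

/-- `(X,d)` controls `W` (some `ρ' ≤ ρ`, `ξ₁`, `U`), ambient `Ω`. -/
def ControlsW {ι : Type*} [Fintype ι] (X : ι → VF n) (d : ι → Deg ν)
    (e : Fin N → Fin ν → ℝ) (Ω : Set (Euc n)) (ρ : ℝ)
    (W : Euc N → Euc n → Euc n) : Prop :=
  ∃ (ρ' ξ₁ : ℝ) (U : Set (Euc n)), 0 < ρ' ∧ ρ' ≤ ρ ∧ 0 < ξ₁ ∧ IsOpen U ∧
    (0 : Euc n) ∈ U ∧ U ⊆ Ω ∧ ControlsWOn X d e Ω U ρ' ξ₁ W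

end Zhang

open Zhang

/-- `P` is a finite linear combination, with constant coefficients, of elements of `S`
having the same degree as `P` (on a common neighborhood of `0`). -/
def IsConstCombOf {n ν : ℕ} (S : Set (VF n × Deg ν)) (P : VF n × Deg ν) : Prop :=
  ∃ (k : ℕ) (c : Fin k → ℝ) (Y : Fin k → VF n),
    (∀ j, (Y j, P.2) ∈ S) ∧
    ∃ U : Set (Euc n), IsOpen U ∧ (0 : Euc n) ∈ U ∧ ∀ x ∈ U, P.1 x = ∑ j, c j • Y j x


namespace FormalLog
open Finset.HasAntidiagonal (antidiagonal)

variable {σ : Type*} {R : Type*} [Ring R]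

/-- Equality of formal power series up to total degree `< M`. -/
def EqUpTo (M : ℕ) (p q : MvPowerSeries σ R) : Prop :=
  ∀ α : σ →₀ ℕ, α.degree < M → MvPowerSeries.coeff α p = MvPowerSeries.coeff α q

lemma degree_le_of_mem_antidiagonal [DecidableEq σ] {α : σ →₀ ℕ} {x : (σ →₀ ℕ) × (σ →₀ ℕ)}
    (hx : x ∈ antidiagonal α) : x.1.degree + x.2.degree = α.degree := by
  rw [← Finset.HasAntidiagonal.mem_antidiagonal.1 hx, map_add]

lemma EqUpTo.mul {M : ℕ} {p q p' q' : MvPowerSeries σ R} (h : EqUpTo M p q)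
    (h' : EqUpTo M p' q') : EqUpTo M (p * p') (q * q') := by
  classical
  intro α hα
  rw [MvPowerSeries.coeff_mul, MvPowerSeries.coeff_mul]
  refine Finset.sum_congr rfl fun x hx => ?_
  have := degree_le_of_mem_antidiagonal hx
  rw [h x.1 (by omega), h' x.2 (by omega)]

/-- `p` has no terms of total degree `< k`. -/
def OrderGe (k : ℕ) (p : MvPowerSeries σ R) : Prop := EqUpTo k p 0

lemma OrderGe.mul {i j : ℕ} {p q : MvPowerSeries σ R} (hp : OrderGe i p) (hq : OrderGe j q) :
    OrderGe (i + j) (p * q) := by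
  classical
  intro α hα
  rw [MvPowerSeries.coeff_mul, map_zero]
  refine Finset.sum_eq_zero fun x hx => ?_
  have := degree_le_of_mem_antidiagonal hx
  by_cases h : x.1.degree < i
  · rw [hp x.1 h, map_zero, zero_mul]
  · rw [hq x.2 (by omega), map_zero, mul_zero]

lemma OrderGe.pow {p : MvPowerSeries σ R} (hp : OrderGe 1 p) (m : ℕ) : OrderGe m (p ^ m) := by
  induction m with
  | zero => intro α hα; omega
  | succ m ih => rw [pow_succ]; exact ih.mul hp

lemma OrderGe.lie {i j : ℕ} {p q : MvPowerSeries σ R} (hp : OrderGe i p) (hq : OrderGe j q) :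
    OrderGe (i + j) ⁅p, q⁆ := by
  intro α hα
  rw [Ring.lie_def, map_sub, hp.mul hq α hα, hq.mul hp α (by omega), sub_self, map_zero]

lemma EqUpTo.mul_left_cancel {M : ℕ} {T Z Z' : MvPowerSeries σ R}
    (hT : MvPowerSeries.coeff 0 T = 1) (h : EqUpTo M (T * Z) (T * Z')) : EqUpTo M Z Z' := by
  classical
  intro α
  induction hd : α.degree using Nat.strong_induction_on generalizing α with
  | _ d ih =>
    intro hα
    have h1 := h α (by omega)
    have h0 : ((0 : σ →₀ ℕ), α) ∈ antidiagonal α := by simp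
    rw [MvPowerSeries.coeff_mul, MvPowerSeries.coeff_mul, ← Finset.add_sum_erase _ _ h0,
      ← Finset.add_sum_erase _ _ h0, hT, one_mul, one_mul] at h1
    refine add_right_cancel (h1.trans (congrArg _ (Finset.sum_congr rfl fun x hx => ?_)))
    rw [Finset.mem_erase] at hx
    have h2 := degree_le_of_mem_antidiagonal hx.2
    have h3 : x.1.degree ≠ 0 := by
      intro h0
      rw [Finsupp.degree_eq_zero_iff] at h0
      apply hx.1
      have := Finset.HasAntidiagonal.mem_antidiagonal.1 hx.2
      rw [h0, zero_add] at this
      rw [← h0, ← this]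
    rw [ih x.2.degree (by omega) x.2 rfl (by omega)]

variable [Algebra ℝ R]

/-- The Euler operator, multiplying the coefficient of `t^α` by `|α|`. -/
def euler : MvPowerSeries σ R →ₗ[ℝ] MvPowerSeries σ R where
  toFun p := fun α => (α.degree : ℝ) • MvPowerSeries.coeff α p
  map_add' p q := by
    ext α
    exact smul_add _ _ _
  map_smul' c p := by
    ext α
    exact smul_comm _ _ _

lemma coeff_euler (p : MvPowerSeries σ R) (α : σ →₀ ℕ) :
    MvPowerSeries.coeff α (euler p) = (α.degree : ℝ) • MvPowerSeries.coeff α p := rfl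

lemma coeff_real_smul (c : ℝ) (p : MvPowerSeries σ R) (α : σ →₀ ℕ) :
    MvPowerSeries.coeff α (c • p) = c • MvPowerSeries.coeff α p := rfl

lemma euler_mul (p q : MvPowerSeries σ R) : euler (p * q) = euler p * q + p * euler q := by
  classical
  ext α
  rw [coeff_euler, map_add, MvPowerSeries.coeff_mul, MvPowerSeries.coeff_mul,
    MvPowerSeries.coeff_mul, Finset.smul_sum, ← Finset.sum_add_distrib]
  refine Finset.sum_congr rfl fun x hx => ?_
  rw [coeff_euler, coeff_euler, ← degree_le_of_mem_antidiagonal hx, smul_mul_assoc,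
    mul_smul_comm, Nat.cast_add, add_smul]

/-- The iterated brackets `[…[[E A, A], A]…, A]` with `j - 1` brackets; `0` for `j = 0`. -/
def iterLie (A : MvPowerSeries σ R) : ℕ → MvPowerSeries σ R
  | 0 => 0
  | 1 => euler A
  | j + 2 => ⁅iterLie A (j + 1), A⁆

lemma iterLie_succ_mul (A : MvPowerSeries σ R) (j : ℕ) :
    iterLie A (j + 1) * A = A * iterLie A (j + 1) + iterLie A (j + 2) := by
  rw [iterLie, Ring.lie_def]; abel

lemma OrderGe.iterLie {A : MvPowerSeries σ R} (hA : OrderGe 1 A) (j : ℕ) :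
    OrderGe j (iterLie A j) := by
  induction j using FormalLog.iterLie.induct with
  | case1 => intro α hα; omega
  | case2 =>
    intro α hα
    rw [FormalLog.iterLie, coeff_euler, hA α hα, map_zero, smul_zero]
  | case3 j ih => exact ih.lie hA

lemma euler_one : euler (1 : MvPowerSeries σ R) = 0 := by
  have := euler_mul (1 : MvPowerSeries σ R) 1
  simpa using this

lemma euler_pow (A : MvPowerSeries σ R) (m : ℕ) :
    euler (A ^ m) = ∑ x ∈ antidiagonal m, (m.choose x.2 : ℝ) • (A ^ x.1 * iterLie A x.2) := by
  induction m with
  | zero => simp [euler_one, iterLie]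
  | succ m ih =>
    have key : ∀ j i, (A ^ i * iterLie A j) * A =
        A ^ (i + 1) * iterLie A j + A ^ i * iterLie A (j + 1) - if j = 0 then A ^ i * euler A else 0 := by
      intro j i
      cases j with
      | zero => simp [iterLie]
      | succ j => rw [mul_assoc, iterLie_succ_mul, mul_add, ← mul_assoc, ← pow_succ]; simp
    rw [pow_succ, euler_mul, ih, Finset.sum_mul]
    simp_rw [smul_mul_assoc, key, smul_sub, smul_add, Finset.sum_sub_distrib, Finset.sum_add_distrib]
    have h3 : ∑ x ∈ antidiagonal m, ((m.choose x.2 : ℝ) •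
        if x.2 = 0 then A ^ x.1 * euler A else 0) = A ^ m * euler A := by
      rw [Finset.sum_eq_single (m, 0)]
      · simp
      · rintro ⟨a, b⟩ h hne
        have : b ≠ 0 := by rintro rfl; apply hne; simpa using h
        simp [this]
      · simp
    rw [h3, sub_add_cancel]
    have h1 : ∑ x ∈ antidiagonal (m + 1), ((m + 1).choose x.2 : ℝ) • (A ^ x.1 * iterLie A x.2)
        = (∑ x ∈ antidiagonal m, (m.choose x.2 : ℝ) • (A ^ (x.1 + 1) * iterLie A x.2)) +
        ∑ x ∈ antidiagonal m, (m.choose x.2 : ℝ) • (A ^ x.1 * iterLie A (x.2 + 1)) := by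
      rw [Finset.Nat.sum_antidiagonal_succ' (f := fun x => ((m + 1).choose x.2 : ℝ) • (A ^ x.1 * iterLie A x.2))]
      simp only [Nat.choose_succ_succ, Nat.cast_add, add_smul, Finset.sum_add_distrib]
      have h2 := Finset.Nat.sum_antidiagonal_succ (n := m)
        (f := fun x => (m.choose x.2 : ℝ) • (A ^ x.1 * iterLie A x.2))
      rw [Finset.Nat.sum_antidiagonal_succ'] at h2
      simp only [iterLie, mul_zero, smul_zero, zero_add, Nat.choose_succ_self, Nat.cast_zero,
        zero_smul] at h2 ⊢
      rw [add_comm, ← h2]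
    rw [h1]

/-- The exponential `∑_{m<M} A^m / m!` truncated after `M` terms. -/
def expTrunc (M : ℕ) (A : MvPowerSeries σ R) : MvPowerSeries σ R :=
  ∑ m ∈ Finset.range M, (m.factorial : ℝ)⁻¹ • A ^ m

/-- `∑_{j<M} iterLie A j / j!`. -/
def logDeriv (M : ℕ) (A : MvPowerSeries σ R) : MvPowerSeries σ R :=
  ∑ j ∈ Finset.range M, (j.factorial : ℝ)⁻¹ • iterLie A j

lemma sum_range_sum_range_eq {G : Type*} [AddCommMonoid G] (M : ℕ) (F : ℕ → ℕ → G) :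
    ∑ i ∈ Finset.range M, ∑ j ∈ Finset.range M, F i j = (∑ m ∈ Finset.range M, ∑ x ∈ antidiagonal m, F x.1 x.2) +
      ∑ x ∈ (Finset.range M ×ˢ Finset.range M).filter (fun x => M ≤ x.1 + x.2), F x.1 x.2 := by
  rw [← Finset.sum_product', ← Finset.sum_filter_not_add_sum_filter _ (fun x => M ≤ x.1 + x.2)]
  congr 1
  rw [← Finset.sum_fiberwise_of_maps_to (t := Finset.range M) (g := fun x : ℕ × ℕ => x.1 + x.2)]
  · refine Finset.sum_congr rfl fun m hm => Finset.sum_congr ?_ fun _ _ => rfl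
    ext ⟨i, j⟩
    simp only [Finset.mem_filter, Finset.mem_product, Finset.mem_range, Finset.HasAntidiagonal.mem_antidiagonal] at hm ⊢
    omega
  · intro x hx
    simp only [Finset.mem_filter, Finset.mem_range] at hx ⊢
    omega

lemma euler_expTrunc {A : MvPowerSeries σ R} (hA : OrderGe 1 A) (M : ℕ) :
    EqUpTo M (euler (expTrunc M A)) (expTrunc M A * logDeriv M A) := by
  intro α hα
  have h1 : expTrunc M A * logDeriv M A = euler (expTrunc M A) +
      ∑ x ∈ (Finset.range M ×ˢ Finset.range M).filter (fun x => M ≤ x.1 + x.2),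
        ((x.1.factorial : ℝ)⁻¹ * (x.2.factorial : ℝ)⁻¹) • (A ^ x.1 * iterLie A x.2) := by
    rw [expTrunc, logDeriv, Finset.sum_mul_sum]
    simp_rw [smul_mul_smul_comm]
    rw [sum_range_sum_range_eq]
    congr 1
    rw [map_sum]
    refine Finset.sum_congr rfl fun m _ => ?_
    rw [map_smul, euler_pow, Finset.smul_sum]
    refine Finset.sum_congr rfl fun x hx => ?_
    rw [smul_smul]
    congr 1
    rw [Finset.HasAntidiagonal.mem_antidiagonal] at hx
    subst hx
    have h := Nat.add_choose_mul_factorial_mul_factorial x.1 x.2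
    have h' : (((x.1 + x.2).choose x.2 : ℕ) : ℝ) * x.1.factorial * x.2.factorial =
      (x.1 + x.2).factorial := by exact_mod_cast h
    have := Nat.factorial_ne_zero x.1
    have := Nat.factorial_ne_zero x.2
    have := Nat.factorial_ne_zero (x.1 + x.2)
    field_simp
    linarith
  rw [h1, map_add, map_sum, Finset.sum_eq_zero, add_zero]
  intro x hx
  rw [Finset.mem_filter] at hx
  rw [coeff_real_smul, (hA.pow x.1).mul (hA.iterLie x.2) α (by omega), map_zero, smul_zero]

lemma coeff_zero_expTrunc {A : MvPowerSeries σ R} (hA : OrderGe 1 A) {M : ℕ} (hM : 0 < M) :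
    MvPowerSeries.coeff 0 (expTrunc M A) = 1 := by
  rw [expTrunc, map_sum, Finset.sum_eq_single_of_mem 0 (by simpa using hM)]
  · simp
  · intro m _ hm
    rw [coeff_real_smul, hA.pow m 0 (by simp; omega), map_zero, smul_zero]

/-- If `E(e^A) = e^A X` up to order `M`, then `X` is the sum of the iterated brackets. -/
lemma eq_logDeriv {A X : MvPowerSeries σ R} (hA : OrderGe 1 A) {M : ℕ} (hM : 0 < M)
    (h : EqUpTo M (euler (expTrunc M A)) (expTrunc M A * X)) : EqUpTo M X (logDeriv M A) :=
  EqUpTo.mul_left_cancel (coeff_zero_expTrunc hA hM)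
    fun α hα => (h α hα).symm.trans (euler_expTrunc hA M α hα)

/-- A family of subspaces indexed by multi-indices and compatible with commutators. -/
def IsLieGraded (𝓛 : (σ →₀ ℕ) → Submodule ℝ R) : Prop :=
  ∀ β γ a b, a ∈ 𝓛 β → b ∈ 𝓛 γ → ⁅a, b⁆ ∈ 𝓛 (β + γ)

lemma coeff_lie_mem {𝓛 : (σ →₀ ℕ) → Submodule ℝ R} (h𝓛 : IsLieGraded 𝓛)
    {A B : MvPowerSeries σ R} (hA : OrderGe 1 A) (hB : OrderGe 1 B) {k : ℕ}
    (hA' : ∀ α, α.degree < k → MvPowerSeries.coeff α A ∈ 𝓛 α)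
    (hB' : ∀ α, α.degree < k → MvPowerSeries.coeff α B ∈ 𝓛 α) (α : σ →₀ ℕ) (hα : α.degree ≤ k) :
    MvPowerSeries.coeff α ⁅B, A⁆ ∈ 𝓛 α := by
  classical
  have hswap : ∑ x ∈ antidiagonal α, MvPowerSeries.coeff x.1 A * MvPowerSeries.coeff x.2 B =
      ∑ x ∈ antidiagonal α, MvPowerSeries.coeff x.2 A * MvPowerSeries.coeff x.1 B := by
    refine Finset.sum_nbij' Prod.swap Prod.swap ?_ ?_ ?_ ?_ ?_ <;> simp [add_comm]
  rw [Ring.lie_def, map_sub, MvPowerSeries.coeff_mul, MvPowerSeries.coeff_mul, hswap,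
    ← Finset.sum_sub_distrib]
  refine Submodule.sum_mem _ fun x hx => ?_
  have h1 := degree_le_of_mem_antidiagonal hx
  rw [← Ring.lie_def, ← Finset.HasAntidiagonal.mem_antidiagonal.1 hx]
  by_cases h2 : x.1.degree < 1
  · rw [hB _ h2, map_zero, Ring.lie_def, zero_mul, mul_zero, sub_self]; exact zero_mem _
  by_cases h3 : x.2.degree < 1
  · rw [hA _ h3, map_zero, Ring.lie_def, zero_mul, mul_zero, sub_self]; exact zero_mem _
  exact h𝓛 _ _ _ _ (hB' _ (by omega)) (hA' _ (by omega))

lemma coeff_iterLie_mem {𝓛 : (σ →₀ ℕ) → Submodule ℝ R} (h𝓛 : IsLieGraded 𝓛)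
    {A : MvPowerSeries σ R} (hA : OrderGe 1 A) {k : ℕ}
    (hA' : ∀ α, α.degree < k → MvPowerSeries.coeff α A ∈ 𝓛 α) (j : ℕ) (hj : j ≠ 1) (α : σ →₀ ℕ)
    (hα : α.degree ≤ k) : MvPowerSeries.coeff α (iterLie A j) ∈ 𝓛 α := by
  induction j using FormalLog.iterLie.induct generalizing α with
  | case1 => rw [iterLie, map_zero]; exact zero_mem _
  | case2 => exact absurd rfl hj
  | case3 j ih =>
    have h1 : OrderGe 1 (iterLie A (j + 1)) := fun α hα => hA.iterLie (j + 1) α (by omega)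
    refine coeff_lie_mem h𝓛 hA h1 hA' (fun β hβ => ?_) α hα
    cases j with
    | zero => exact Submodule.smul_mem _ _ (hA' β hβ)
    | succ j => exact ih (by omega) β hβ.le

lemma coeff_logDeriv_sub_mem {𝓛 : (σ →₀ ℕ) → Submodule ℝ R} (h𝓛 : IsLieGraded 𝓛)
    {A : MvPowerSeries σ R} (hA : OrderGe 1 A) {k : ℕ}
    (hA' : ∀ α, α.degree < k → MvPowerSeries.coeff α A ∈ 𝓛 α) (α : σ →₀ ℕ)
    (hα : α.degree ≤ k) {M : ℕ} (hM : 1 < M) :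
    MvPowerSeries.coeff α (logDeriv M A) - (α.degree : ℝ) • MvPowerSeries.coeff α A ∈ 𝓛 α := by
  rw [logDeriv, ← Finset.add_sum_erase _ _ (Finset.mem_range.2 hM), map_add, map_sum, coeff_real_smul]
  have : MvPowerSeries.coeff α (iterLie A 1) = (α.degree : ℝ) • MvPowerSeries.coeff α A := rfl
  rw [this, Nat.factorial_one, Nat.cast_one, inv_one, one_smul, add_sub_cancel_left]
  refine Submodule.sum_mem _ fun j hj => ?_
  rw [coeff_real_smul]
  exact Submodule.smul_mem _ _ (coeff_iterLie_mem h𝓛 hA hA' j (Finset.ne_of_mem_erase hj) α hα)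

/-- The coefficients of the logarithmic derivative `X` of `e^A` lie in any graded Lie algebra
containing the coefficients of `A`, and conversely. -/
theorem coeff_mem_iff {𝓛 : (σ →₀ ℕ) → Submodule ℝ R} (h𝓛 : IsLieGraded 𝓛)
    {A X : MvPowerSeries σ R} (hA : OrderGe 1 A)
    (h : ∀ M, 0 < M → EqUpTo M (euler (expTrunc M A)) (expTrunc M A * X)) :
    (∀ α, MvPowerSeries.coeff α A ∈ 𝓛 α) ↔ ∀ α, MvPowerSeries.coeff α X ∈ 𝓛 α := by
  have key : ∀ α : σ →₀ ℕ, (∀ β : σ →₀ ℕ, β.degree < α.degree → MvPowerSeries.coeff β A ∈ 𝓛 β) →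
      MvPowerSeries.coeff α X - (α.degree : ℝ) • MvPowerSeries.coeff α A ∈ 𝓛 α := by
    intro α hα
    rw [eq_logDeriv hA (M := α.degree + 2) (by omega) (h _ (by omega)) α (by omega)]
    exact coeff_logDeriv_sub_mem h𝓛 hA hα α le_rfl (by omega)
  constructor
  · intro hA' α
    have := add_mem (key α fun β _ => hA' β) (Submodule.smul_mem _ (α.degree : ℝ) (hA' α))
    rwa [sub_add_cancel] at this
  · intro hX α
    induction hd : α.degree using Nat.strong_induction_on generalizing α with
    | _ d ih =>
      rcases Nat.eq_zero_or_pos d with h0 | h0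
      · rw [hA α (by omega), map_zero]; exact zero_mem _
      · have h1 := key α fun β hβ => ih β.degree (by omega) β rfl
        have h2 := sub_mem (hX α) h1
        rw [sub_sub_cancel] at h2
        refine (Submodule.smul_mem_iff _ ?_).1 h2
        exact_mod_cast (by omega : α.degree ≠ 0)

/-- The homogeneous component of degree `k`, evaluated at `t`: `∑_{|α|=k} t^α p_α`. -/
def evalHom {N : ℕ} (t : Fin N → ℝ) (k : ℕ) : MvPowerSeries (Fin N) R →ₗ[ℝ] R where
  toFun p := ∑ α ∈ Finset.finsuppAntidiag Finset.univ k, (∏ i, t i ^ α i) • MvPowerSeries.coeff α p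
  map_add' p q := by simp [smul_add, Finset.sum_add_distrib]
  map_smul' c p := by
    simp only [coeff_real_smul, Finset.smul_sum, RingHom.id_apply]
    exact Finset.sum_congr rfl fun α _ => smul_comm _ _ _

lemma evalHom_apply {N : ℕ} (t : Fin N → ℝ) (k : ℕ) (p : MvPowerSeries (Fin N) R) :
    evalHom t k p = ∑ α ∈ Finset.finsuppAntidiag Finset.univ k, (∏ i, t i ^ α i) • MvPowerSeries.coeff α p :=
  rfl

lemma mem_finsuppAntidiag_univ {N : ℕ} {k : ℕ} {α : Fin N →₀ ℕ} :
    α ∈ Finset.finsuppAntidiag Finset.univ k ↔ α.degree = k := by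
  simp [Finset.mem_finsuppAntidiag, Finsupp.degree_eq_sum]

lemma evalHom_euler {N : ℕ} (t : Fin N → ℝ) (k : ℕ) (p : MvPowerSeries (Fin N) R) :
    evalHom t k (euler p) = (k : ℝ) • evalHom t k p := by
  rw [evalHom_apply, evalHom_apply, Finset.smul_sum]
  refine Finset.sum_congr rfl fun α hα => ?_
  rw [coeff_euler, mem_finsuppAntidiag_univ.1 hα, smul_comm]

lemma evalHom_one_zero {N : ℕ} (t : Fin N → ℝ) :
    evalHom t 0 (1 : MvPowerSeries (Fin N) R) = 1 := by
  rw [evalHom_apply]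
  simp

lemma evalHom_one_of_ne {N : ℕ} (t : Fin N → ℝ) {k : ℕ} (hk : k ≠ 0) :
    evalHom t k (1 : MvPowerSeries (Fin N) R) = 0 := by
  classical
  rw [evalHom_apply]
  refine Finset.sum_eq_zero fun α hα => ?_
  have h := mem_finsuppAntidiag_univ.1 hα
  have : α ≠ 0 := by rintro rfl; simp at h; omega
  rw [MvPowerSeries.coeff_one, if_neg this, smul_zero]

lemma evalHom_mul {N : ℕ} (t : Fin N → ℝ) (k : ℕ) (p q : MvPowerSeries (Fin N) R) :
    evalHom t k (p * q) = ∑ x ∈ antidiagonal k, evalHom t x.1 p * evalHom t x.2 q := by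
  classical
  simp_rw [evalHom_apply, Finset.sum_mul_sum, MvPowerSeries.coeff_mul, Finset.smul_sum, ← Finset.sum_product']
  rw [Finset.sum_sigma', Finset.sum_sigma']
  refine Finset.sum_bij' (fun x _ => ⟨(x.2.1.degree, x.2.2.degree), x.2⟩)
    (fun x _ => ⟨x.2.1 + x.2.2, x.2⟩) ?_ ?_ ?_ ?_ ?_
  · rintro ⟨α, β, γ⟩ h
    simp only [Finset.mem_sigma, mem_finsuppAntidiag_univ, Finset.HasAntidiagonal.mem_antidiagonal,
      Finset.mem_product] at h ⊢
    rw [← map_add, h.2]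
    exact ⟨h.1, trivial, trivial⟩
  · rintro ⟨⟨i, j⟩, β, γ⟩ h
    simp only [Finset.mem_sigma, mem_finsuppAntidiag_univ, Finset.HasAntidiagonal.mem_antidiagonal,
      Finset.mem_product, and_true] at h ⊢
    rw [map_add, h.2.1, h.2.2, h.1]
  · rintro ⟨α, β, γ⟩ h
    simp only [Finset.mem_sigma, Finset.HasAntidiagonal.mem_antidiagonal] at h ⊢
    rw [h.2]
  · rintro ⟨⟨i, j⟩, β, γ⟩ h
    simp only [Finset.mem_sigma, mem_finsuppAntidiag_univ, Finset.mem_product] at h ⊢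
    rw [h.2.1, h.2.2]
  · rintro ⟨α, β, γ⟩ h
    simp only [Finset.mem_sigma, Finset.HasAntidiagonal.mem_antidiagonal] at h ⊢
    rw [smul_mul_smul_comm, ← Finset.prod_mul_distrib, ← h.2]
    simp [pow_add]

/-- A homogeneous polynomial function on `ℝ^N` determines its coefficients. -/
lemma eq_of_sum_eq {N : ℕ} {k : ℕ} {c d : (Fin N →₀ ℕ) → ℝ}
    (h : ∀ t : Fin N → ℝ, ∑ α ∈ Finset.finsuppAntidiag Finset.univ k, (∏ i, t i ^ α i) * c α =
      ∑ α ∈ Finset.finsuppAntidiag Finset.univ k, (∏ i, t i ^ α i) * d α)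
    (α : Fin N →₀ ℕ) (hα : α.degree = k) : c α = d α := by
  classical
  have h1 : ∑ α ∈ Finset.finsuppAntidiag Finset.univ k, MvPolynomial.monomial α (c α) =
      ∑ α ∈ Finset.finsuppAntidiag Finset.univ k, MvPolynomial.monomial α (d α) := by
    refine MvPolynomial.funext fun t => ?_
    simp only [map_sum, MvPolynomial.eval_monomial]
    convert h t using 2 <;>
    · rw [mul_comm, Finsupp.prod_fintype _ _ (by simp)]
  have h2 := congrArg (MvPolynomial.coeff α) h1
  simpa only [MvPolynomial.coeff_sum, MvPolynomial.coeff_monomial, Finset.sum_ite_eq',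
    mem_finsuppAntidiag_univ, hα, if_true] using h2

end FormalLog

section Expansion
open Asymptotics
open Finset.HasAntidiagonal (antidiagonal)

/-- `h(s) = ∑_{k<M} c_k s^k + O(s^M)` as `s → 0+`. -/
def HasExpansion (M : ℕ) (h : ℝ → ℝ) (c : ℕ → ℝ) : Prop :=
  (fun s => h s - ∑ k ∈ Finset.range M, c k * s ^ k) =O[𝓝[>] 0] fun s => s ^ M

lemma pow_isBigO_pow_right {m k : ℕ} (h : m ≤ k) :
    (fun s : ℝ => s ^ k) =O[𝓝[>] 0] fun s => s ^ m := by
  refine IsBigO.of_bound 1 ?_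
  filter_upwards [Ioo_mem_nhdsGT (zero_lt_one' ℝ)] with s hs
  rw [one_mul, Real.norm_of_nonneg (pow_nonneg hs.1.le _),
    Real.norm_of_nonneg (pow_nonneg hs.1.le _)]
  exact pow_le_pow_of_le_one hs.1.le hs.2.le h

lemma eq_zero_of_sum_isBigO (M : ℕ) (a : ℕ → ℝ)
    (h : (fun s => ∑ k ∈ Finset.range M, a k * s ^ k) =O[𝓝[>] 0] fun s : ℝ => s ^ M) :
    ∀ k < M, a k = 0 := by
  induction M generalizing a with
  | zero => intro k hk; omega
  | succ M ih =>
    have h0 : a 0 = 0 := by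
      have h1 : Tendsto (fun s : ℝ => ∑ k ∈ Finset.range (M + 1), a k * s ^ k) (𝓝[>] 0) (𝓝 0) := by
        refine h.trans_tendsto ?_
        have : Tendsto (fun s : ℝ => s ^ (M + 1)) (𝓝 0) (𝓝 (0 ^ (M + 1))) :=
          (continuous_pow (M + 1)).tendsto 0
        rw [zero_pow (by omega)] at this
        exact this.mono_left nhdsWithin_le_nhds
      have h2 : Tendsto (fun s : ℝ => ∑ k ∈ Finset.range (M + 1), a k * s ^ k) (𝓝[>] 0) (𝓝 (a 0)) := by
        have : Continuous fun s : ℝ => ∑ k ∈ Finset.range (M + 1), a k * s ^ k := by fun_prop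
        have h3 := this.tendsto 0
        have h4 : ∑ k ∈ Finset.range (M + 1), a k * (0 : ℝ) ^ k = a 0 := by simp [Finset.sum_range_succ']
        rw [h4] at h3
        exact h3.mono_left nhdsWithin_le_nhds
      exact tendsto_nhds_unique h2 h1
    have h1 : ∀ k < M, a (k + 1) = 0 := by
      refine ih (fun k => a (k + 1)) ?_
      obtain ⟨C, hC⟩ := h.bound
      refine IsBigO.of_bound C ?_
      filter_upwards [hC, self_mem_nhdsWithin] with s hs hs0
      have hs0 : 0 < s := hs0
      rw [Finset.sum_range_succ', h0, zero_mul, add_zero] at hs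
      have h2 : ∑ k ∈ Finset.range M, a (k + 1) * s ^ (k + 1) = s * ∑ k ∈ Finset.range M, a (k + 1) * s ^ k := by
        rw [Finset.mul_sum]
        exact Finset.sum_congr rfl fun k _ => by ring
      rw [h2, norm_mul, pow_succ', norm_mul, mul_left_comm] at hs
      exact le_of_mul_le_mul_left hs (norm_pos_iff.2 hs0.ne')
    intro k hk
    cases k with
    | zero => exact h0
    | succ k => exact h1 k (by omega)

lemma HasExpansion.unique {M : ℕ} {h : ℝ → ℝ} {c d : ℕ → ℝ} (hc : HasExpansion M h c)
    (hd : HasExpansion M h d) {k : ℕ} (hk : k < M) : c k = d k := by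
  have := eq_zero_of_sum_isBigO M (fun k => d k - c k) ?_ k hk
  · linarith
  · refine (hc.sub hd).congr_left fun s => ?_
    simp only [sub_mul, Finset.sum_sub_distrib]
    ring

lemma HasExpansion.congr' {M : ℕ} {h h' : ℝ → ℝ} {c : ℕ → ℝ} (hc : HasExpansion M h c)
    (hh : (fun s => h' s - h s) =O[𝓝[>] 0] fun s => s ^ M) : HasExpansion M h' c :=
  (hc.add hh).congr_left fun s => by ring

lemma HasExpansion.congr_coeff {M : ℕ} {h : ℝ → ℝ} {c d : ℕ → ℝ} (hc : HasExpansion M h c)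
    (hd : ∀ k < M, c k = d k) : HasExpansion M h d :=
  IsBigO.congr_left hc fun s => by
    rw [Finset.sum_congr rfl fun k hk => by rw [hd k (Finset.mem_range.1 hk)]]

lemma HasExpansion.sum {ι : Type*} {M : ℕ} (I : Finset ι) {h : ι → ℝ → ℝ} {c : ι → ℕ → ℝ}
    (hc : ∀ i ∈ I, HasExpansion M (h i) (c i)) :
    HasExpansion M (fun s => ∑ i ∈ I, h i s) (fun k => ∑ i ∈ I, c i k) := by
  refine (IsBigO.sum hc).congr_left fun s => ?_
  simp only [Finset.sum_apply, Finset.sum_sub_distrib, Finset.sum_mul]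
  congr 1
  exact Finset.sum_comm

lemma HasExpansion.const_mul {M : ℕ} {h : ℝ → ℝ} {c : ℕ → ℝ} (a : ℝ) (hc : HasExpansion M h c) :
    HasExpansion M (fun s => a * h s) (fun k => a * c k) :=
  (IsBigO.const_mul_left hc a).congr_left fun s => by
    rw [mul_sub, Finset.mul_sum]
    simp only [mul_assoc]

/-- The Cauchy product of expansions. -/
lemma HasExpansion.sum_pow_mul {M : ℕ} {h : ℕ → ℝ → ℝ} {c : ℕ → ℕ → ℝ}
    (hc : ∀ j < M, HasExpansion M (h j) (c j)) :
    HasExpansion M (fun s => ∑ j ∈ Finset.range M, s ^ j * h j s)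
      (fun k => ∑ x ∈ antidiagonal k, c x.2 x.1) := by
  have h1 : ∀ j ∈ Finset.range M, (fun s => s ^ j * (h j s - ∑ k ∈ Finset.range M, c j k * s ^ k))
      =O[𝓝[>] 0] fun s : ℝ => s ^ M := fun j hj =>
    ((pow_isBigO_pow_right (Nat.zero_le j)).mul (hc j (Finset.mem_range.1 hj))).congr_right
      fun s => by simp
  have h2 : ∀ x ∈ (Finset.range M ×ˢ Finset.range M).filter (fun x => M ≤ x.1 + x.2),
      (fun s : ℝ => c x.2 x.1 * s ^ (x.1 + x.2)) =O[𝓝[>] 0] fun s => s ^ M := fun x hx =>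
    (pow_isBigO_pow_right (Finset.mem_filter.1 hx).2).const_mul_left _
  refine ((IsBigO.sum h1).add (IsBigO.sum h2)).congr_left fun s => ?_
  have h3 := FormalLog.sum_range_sum_range_eq M (fun i j => c j i * s ^ (i + j))
  have h4 : ∑ j ∈ Finset.range M, s ^ j * ∑ k ∈ Finset.range M, c j k * s ^ k =
      ∑ i ∈ Finset.range M, ∑ j ∈ Finset.range M, c j i * s ^ (i + j) := by
    rw [Finset.sum_comm]
    refine Finset.sum_congr rfl fun j _ => ?_
    rw [Finset.mul_sum]
    exact Finset.sum_congr rfl fun k _ => by ring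
  have h5 : ∑ k ∈ Finset.range M, (∑ x ∈ antidiagonal k, c x.2 x.1) * s ^ k =
      ∑ k ∈ Finset.range M, ∑ x ∈ antidiagonal k, c x.2 x.1 * s ^ (x.1 + x.2) := by
    refine Finset.sum_congr rfl fun k _ => ?_
    rw [Finset.sum_mul]
    exact Finset.sum_congr rfl fun x hx => by rw [Finset.HasAntidiagonal.mem_antidiagonal.1 hx]
  simp only [Finset.sum_apply, mul_sub, Finset.sum_sub_distrib]
  rw [h4, h3, h5]
  ring

/-- An expansion of `s h'(s)` is obtained from one of `h` by applying the Euler operator. -/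
lemma HasExpansion.euler {M : ℕ} {h h' : ℝ → ℝ} {c d : ℕ → ℝ} {δ : ℝ} (hδ : 0 < δ)
    (hcont : ContinuousOn h (Set.Ico 0 δ)) (hderiv : ∀ s ∈ Set.Ioo 0 δ, HasDerivAt h (h' s) s)
    (hc : HasExpansion M h c) (hd : HasExpansion M (fun s => s * h' s) d) (hd0 : d 0 = 0)
    {k : ℕ} (hk : k < M) : k * c k = d k := by
  obtain ⟨M, rfl⟩ : ∃ m, M = m + 1 := ⟨M - 1, by omega⟩
  have h1 : HasExpansion (M + 1) h (fun k => if k = 0 then h 0 else d k / k) := by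
    obtain ⟨C, hC⟩ := hd.bound
    obtain ⟨η, hη, hC⟩ := (mem_nhdsGT_iff_exists_Ioo_subset).1 hC
    have hη : 0 < η := hη
    refine IsBigO.of_bound |C| ?_
    filter_upwards [Ioo_mem_nhdsGT (lt_min hδ hη)] with s hs
    have hsδ : s < δ := hs.2.trans_le (min_le_left _ _)
    have hsη : s < η := hs.2.trans_le (min_le_right _ _)
    set r : ℝ → ℝ := fun s => h s - ∑ k ∈ Finset.range (M + 1), (if k = 0 then h 0 else d k / k) * s ^ k
    have hr : ContinuousOn r (Set.Icc 0 s) := by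
      refine (hcont.mono fun u hu => ⟨hu.1, hu.2.trans_lt hsδ⟩).sub ?_
      exact Continuous.continuousOn (by fun_prop)
    have hr' : ∀ u ∈ Set.Ioo 0 s, HasDerivAt r (h' u - ∑ k ∈ Finset.range M, d (k + 1) * u ^ k) u := by
      intro u hu
      refine (hderiv u ⟨hu.1, hu.2.trans hsδ⟩).sub ?_
      have : (fun s : ℝ => ∑ k ∈ Finset.range (M + 1), (if k = 0 then h 0 else d k / k) * s ^ k) =
          fun s => ∑ k ∈ Finset.range M, d (k + 1) / (k + 1 : ℕ) * s ^ (k + 1) + h 0 := by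
        funext s
        simp [Finset.sum_range_succ']
      rw [this]
      refine (HasDerivAt.fun_sum fun k _ => ?_).add_const _
      have h2 := (hasDerivAt_pow (k + 1) u).const_mul (d (k + 1) / (k + 1 : ℕ))
      refine h2.congr_deriv ?_
      have : ((k + 1 : ℕ) : ℝ) ≠ 0 := by positivity
      field_simp
      simp
    obtain ⟨u, hu, hru⟩ := exists_hasDerivAt_eq_slope r _ hs.1 hr hr'
    have hr0 : r 0 = 0 := by simp [r, Finset.sum_range_succ']
    have hu' := hC ⟨hu.1, hu.2.trans hsη⟩
    have hus : |u| * |h' u - ∑ k ∈ Finset.range M, d (k + 1) * u ^ k| ≤ C * (|u| * |u| ^ M) := by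
      rw [← abs_mul]
      simp only [Set.mem_ofPred_eq, Finset.sum_range_succ', hd0, zero_mul, add_zero, Real.norm_eq_abs,
        abs_pow, pow_succ' |u|] at hu'
      have h5 : u * (h' u - ∑ k ∈ Finset.range M, d (k + 1) * u ^ k) =
          u * h' u - ∑ k ∈ Finset.range M, d (k + 1) * u ^ (k + 1) := by
        rw [mul_sub, Finset.mul_sum]
        congr 1
        exact Finset.sum_congr rfl fun k _ => by ring
      rw [h5]
      exact hu'
    rw [mul_left_comm] at hus
    have hus' := le_of_mul_le_mul_left hus (abs_pos.2 hu.1.ne')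
    have h3 : r s = (h' u - ∑ k ∈ Finset.range M, d (k + 1) * u ^ k) * s := by
      rw [hru, hr0]
      field_simp [hs.1.ne']
      ring
    change ‖r s‖ ≤ _
    rw [h3, norm_mul, pow_succ, norm_mul, norm_pow, ← mul_assoc]
    refine mul_le_mul_of_nonneg_right ?_ (norm_nonneg _)
    refine hus'.trans (mul_le_mul (le_abs_self C) ?_ (by positivity) (abs_nonneg C))
    refine pow_le_pow_left₀ (abs_nonneg _) ?_ M
    rw [Real.norm_eq_abs, abs_of_pos hu.1, abs_of_pos hs.1]
    exact hu.2.le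
  have h2 := hc.unique h1 hk
  rcases Nat.eq_zero_or_pos k with rfl | hk0
  · simp [hd0]
  · have : (k : ℝ) ≠ 0 := by positivity
    rw [h2, if_neg hk0.ne']
    field_simp

/-- Taylor's formula for a chain of successive derivatives on `[0,1]`. -/
lemma taylor_chain_bound (M : ℕ) (g : ℕ → ℝ → ℝ) (B : ℝ)
    (hg : ∀ m < M, ∀ u ∈ Set.Icc (0 : ℝ) 1, HasDerivAt (g m) (g (m + 1) u) u)
    (hB : ∀ u ∈ Set.Icc (0 : ℝ) 1, |g M u| ≤ B) :
    ∀ u ∈ Set.Icc (0 : ℝ) 1,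
      |g 0 u - ∑ m ∈ Finset.range M, (m.factorial : ℝ)⁻¹ * g m 0 * u ^ m| ≤ B := by
  induction M generalizing g with
  | zero => simpa using hB
  | succ M ih =>
    intro u hu
    have h1 := ih (fun m => g (m + 1)) (fun m hm => hg (m + 1) (by omega)) hB
    rcases hu.1.eq_or_lt with h0 | h0
    · rw [← h0]
      simp only [Finset.sum_range_succ', pow_succ, mul_zero, Finset.sum_const_zero]
      simpa using (abs_nonneg _).trans (hB 0 (by simp))
    set r : ℝ → ℝ := fun u => g 0 u - ∑ m ∈ Finset.range (M + 1), (m.factorial : ℝ)⁻¹ * g m 0 * u ^ m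
    have hr' : ∀ v ∈ Set.Icc (0 : ℝ) 1, HasDerivAt r
        (g 1 v - ∑ m ∈ Finset.range M, (m.factorial : ℝ)⁻¹ * g (m + 1) 0 * v ^ m) v := by
      intro v hv
      refine (hg 0 (by omega) v hv).sub ?_
      simp_rw [Finset.sum_range_succ']
      simp only [pow_zero]
      refine (HasDerivAt.fun_sum fun k _ => ?_).add_const _
      have h2 := (hasDerivAt_pow (k + 1) v).const_mul ((((k + 1).factorial : ℝ))⁻¹ * g (k + 1) 0)
      refine h2.congr_deriv ?_
      rw [Nat.factorial_succ, Nat.cast_mul]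
      have := Nat.factorial_ne_zero k
      have : ((k + 1 : ℕ) : ℝ) ≠ 0 := by positivity
      field_simp
      simp
    have hsub : ∀ v, v ∈ Set.Icc 0 u → v ∈ Set.Icc (0 : ℝ) 1 := fun v hv => ⟨hv.1, hv.2.trans hu.2⟩
    obtain ⟨v, hv, hrv⟩ := exists_hasDerivAt_eq_slope r _ h0
      (fun v hv => (hr' v (hsub v hv)).continuousAt.continuousWithinAt)
      (fun v hv => hr' v (hsub v (Set.Ioo_subset_Icc_self hv)))
    have hr0 : r 0 = 0 := by simp [r, Finset.sum_range_succ']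
    have h3 : r u = (g 1 v - ∑ m ∈ Finset.range M, (m.factorial : ℝ)⁻¹ * g (m + 1) 0 * v ^ m) * u := by
      rw [hrv, hr0]
      field_simp
      ring
    have h4 := h1 v (hsub v (Set.Ioo_subset_Icc_self hv))
    change |r u| ≤ B
    rw [h3, abs_mul, abs_of_pos h0]
    exact (mul_le_of_le_one_right (abs_nonneg _) hu.2).trans h4

end Expansion

/-! ### Vector fields as operators on smooth functions -/

/-- The smooth functions on `U`, extended by `0` outside of `U`. -/
def smoothFun {n : ℕ} (U : Set (Euc n)) : Submodule ℝ (Euc n → ℝ) where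
  carrier := {f | ContDiffOn ℝ (⊤ : ℕ∞) f U ∧ ∀ x ∉ U, f x = 0}
  add_mem' hf hg := ⟨hf.1.add hg.1, fun x hx => by simp [hf.2 x hx, hg.2 x hx]⟩
  zero_mem' := ⟨contDiffOn_const, fun _ _ => rfl⟩
  smul_mem' c f hf := ⟨hf.1.const_smul c, fun x hx => by simp [hf.2 x hx]⟩

section Operators
variable {n : ℕ} {U : Set (Euc n)}

lemma indicator_mem_smoothFun {f : Euc n → ℝ} (hf : ContDiffOn ℝ (⊤ : ℕ∞) f U) :
    U.indicator f ∈ smoothFun U :=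
  ⟨hf.congr fun _ hx => Set.indicator_of_mem hx f, fun _ hx => Set.indicator_of_notMem hx f⟩

lemma contDiffAt_smoothFun (hU : IsOpen U) (f : smoothFun U) {x : Euc n} (hx : x ∈ U) :
    ContDiffAt ℝ (⊤ : ℕ∞) f.1 x :=
  f.2.1.contDiffAt (hU.mem_nhds hx)

lemma differentiableAt_smoothFun (hU : IsOpen U) (f : smoothFun U) {x : Euc n} (hx : x ∈ U) :
    DifferentiableAt ℝ f.1 x :=
  (contDiffAt_smoothFun hU f hx).differentiableAt (by simp)

lemma contDiffOn_fderiv_apply {F : Type*} [NormedAddCommGroup F] [NormedSpace ℝ F]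
    (hU : IsOpen U) {f : Euc n → F} (hf : ContDiffOn ℝ (⊤ : ℕ∞) f U) {X : VF n}
    (hX : ContDiffOn ℝ (⊤ : ℕ∞) X U) :
    ContDiffOn ℝ (⊤ : ℕ∞) (fun x => fderiv ℝ f x (X x)) U :=
  (hf.fderiv_of_isOpen hU (by simp)).clm_apply hX

open Classical in
/-- The derivation of `smoothFun U` defined by a vector field which is smooth on the open set
`U` (and `0` if `X` is not smooth). -/
def lieDer (U : Set (Euc n)) (X : VF n) : Module.End ℝ (smoothFun U) :=
  if h : IsOpen U ∧ ContDiffOn ℝ (⊤ : ℕ∞) X U then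
    { toFun := fun f => ⟨U.indicator fun x => fderiv ℝ f.1 x (X x),
        indicator_mem_smoothFun (contDiffOn_fderiv_apply h.1 f.2.1 h.2)⟩
      map_add' := fun f g => by
        ext x
        by_cases hx : x ∈ U
        · simp [hx, fderiv_add (differentiableAt_smoothFun h.1 f hx)
            (differentiableAt_smoothFun h.1 g hx)]
        · simp [hx]
      map_smul' := fun c f => by
        ext x
        by_cases hx : x ∈ U
        · simp [hx, fderiv_const_smul (differentiableAt_smoothFun h.1 f hx)]
        · simp [hx] }
  else 0

lemma lieDer_apply (hU : IsOpen U) {X : VF n} (hX : ContDiffOn ℝ (⊤ : ℕ∞) X U)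
    (f : smoothFun U) {x : Euc n} (hx : x ∈ U) :
    (lieDer U X f).1 x = fderiv ℝ f.1 x (X x) := by
  rw [lieDer, dif_pos ⟨hU, hX⟩]
  exact Set.indicator_of_mem hx fun z => fderiv ℝ f.1 z (X z)

lemma smoothFun_ext {f g : smoothFun U} (h : ∀ x ∈ U, f.1 x = g.1 x) : f = g := by
  ext x
  by_cases hx : x ∈ U
  · exact h x hx
  · rw [f.2.2 x hx, g.2.2 x hx]

lemma lieDer_sum_smul {ι : Type*} (hU : IsOpen U) (I : Finset ι) (c : ι → ℝ) {X : ι → VF n}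
    (hX : ∀ i, ContDiffOn ℝ (⊤ : ℕ∞) (X i) U) :
    lieDer U (fun x => ∑ i ∈ I, c i • X i x) = ∑ i ∈ I, c i • lieDer U (X i) := by
  refine LinearMap.ext fun f => smoothFun_ext fun x hx => ?_
  rw [lieDer_apply hU (ContDiffOn.sum fun i _ => (hX i).const_smul (c i)) f hx]
  simp [lieDer_apply hU (hX _) f hx]

lemma lieDer_zero (hU : IsOpen U) : lieDer U (0 : VF n) = 0 :=
  LinearMap.ext fun f => smoothFun_ext fun x hx => by
    rw [lieDer_apply hU (X := 0) (contDiffOn_const (c := 0)) f hx]; simp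

lemma contDiffOn_lieBracket (hU : IsOpen U) {X Y : VF n} (hX : ContDiffOn ℝ (⊤ : ℕ∞) X U)
    (hY : ContDiffOn ℝ (⊤ : ℕ∞) Y U) : ContDiffOn ℝ (⊤ : ℕ∞) (Zhang.lieBracket X Y) U :=
  (contDiffOn_fderiv_apply hU hY hX).sub (contDiffOn_fderiv_apply hU hX hY)

lemma lieDer_lieDer_apply (hU : IsOpen U) {X Y : VF n} (hX : ContDiffOn ℝ (⊤ : ℕ∞) X U)
    (hY : ContDiffOn ℝ (⊤ : ℕ∞) Y U) (f : smoothFun U) {x : Euc n} (hx : x ∈ U) :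
    (lieDer U X (lieDer U Y f)).1 x =
      fderiv ℝ f.1 x (fderiv ℝ Y x (X x)) + fderiv ℝ (fderiv ℝ f.1) x (X x) (Y x) := by
  rw [lieDer_apply hU hX _ hx]
  have h1 : (lieDer U Y f).1 =ᶠ[𝓝 x] fun z => fderiv ℝ f.1 z (Y z) := by
    filter_upwards [hU.mem_nhds hx] with z hz using lieDer_apply hU hY f hz
  have h2 : DifferentiableAt ℝ (fderiv ℝ f.1) x :=
    ((f.2.1.fderiv_of_isOpen hU (m := (⊤ : ℕ∞)) (by simp)).contDiffAt
      (hU.mem_nhds hx)).differentiableAt (by simp)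
  have h3 : DifferentiableAt ℝ Y x := (hY.contDiffAt (hU.mem_nhds hx)).differentiableAt (by simp)
  rw [h1.fderiv_eq, fderiv_clm_apply h2 h3]
  simp

lemma lieDer_lieBracket (hU : IsOpen U) {X Y : VF n} (hX : ContDiffOn ℝ (⊤ : ℕ∞) X U)
    (hY : ContDiffOn ℝ (⊤ : ℕ∞) Y U) :
    lieDer U (Zhang.lieBracket X Y) = ⁅lieDer U X, lieDer U Y⁆ := by
  refine LinearMap.ext fun f => smoothFun_ext fun x hx => ?_
  have hsymm : IsSymmSndFDerivAt ℝ f.1 x :=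
    (contDiffAt_smoothFun hU f hx).isSymmSndFDerivAt
      (by simpa using WithTop.coe_le_coe.2 (le_top (a := (2 : ℕ∞))))
  rw [lieDer_apply hU (contDiffOn_lieBracket hU hX hY) f hx, Ring.lie_def, Zhang.lieBracket,
    map_sub]
  change _ = (lieDer U X (lieDer U Y f)).1 x - (lieDer U Y (lieDer U X f)).1 x
  rw [lieDer_lieDer_apply hU hX hY f hx, lieDer_lieDer_apply hU hY hX f hx, hsymm (X x) (Y x)]
  ring

/-- The coordinate function `x_i` on `U`. -/
def coordFun (U : Set (Euc n)) (i : Fin n) : smoothFun U :=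
  ⟨U.indicator fun x => x i, indicator_mem_smoothFun (by fun_prop)⟩

lemma lieDer_coordFun (hU : IsOpen U) {X : VF n} (hX : ContDiffOn ℝ (⊤ : ℕ∞) X U) (i : Fin n)
    {x : Euc n} (hx : x ∈ U) : (lieDer U X (coordFun U i)).1 x = X x i := by
  rw [lieDer_apply hU hX _ hx]
  have h1 : (coordFun U i).1 =ᶠ[𝓝 x] EuclideanSpace.proj i := by
    filter_upwards [hU.mem_nhds hx] with z hz using
      Set.indicator_of_mem hz fun z : Euc n => z i
  rw [h1.fderiv_eq, ContinuousLinearMap.fderiv]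
  rfl

end Operators

/-! ### Expansions along the exponential and Taylor coefficient fields -/

section Expansion
open FormalLog Asymptotics
open Finset.HasAntidiagonal (antidiagonal)

variable {N n : ℕ} {U : Set (Euc n)}

/-- The power series of derivations whose coefficients are given by a family of vector fields. -/
def fieldSeries (U : Set (Euc n)) (X : (Fin N → ℕ) → VF n) :
    MvPowerSeries (Fin N) (Module.End ℝ (smoothFun U)) :=
  fun α => lieDer U (X α)

lemma coeff_fieldSeries (X : (Fin N → ℕ) → VF n) (α : Fin N →₀ ℕ) :
    MvPowerSeries.coeff α (fieldSeries U X) = lieDer U (X α) := rfl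

lemma orderGe_fieldSeries (hU : IsOpen U) {X : (Fin N → ℕ) → VF n} (hX : X 0 = 0) :
    OrderGe 1 (fieldSeries U X) := by
  intro α hα
  have h0 : α = 0 := (Finsupp.degree_eq_zero_iff α).1 (by omega)
  rw [coeff_fieldSeries, h0, Finsupp.coe_zero, hX, lieDer_zero hU, map_zero]

/-- The homogeneous part of degree `j` of `∑ t^α X_α`. -/
def homField (X : (Fin N → ℕ) → VF n) (t : Euc N) (j : ℕ) : VF n :=
  fun z => ∑ α ∈ Finset.finsuppAntidiag Finset.univ j, (∏ i, t i ^ α i) • X α z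

lemma contDiffOn_homField {X : (Fin N → ℕ) → VF n} (hX : ∀ α, ContDiffOn ℝ (⊤ : ℕ∞) (X α) U)
    (t : Euc N) (j : ℕ) : ContDiffOn ℝ (⊤ : ℕ∞) (homField X t j) U :=
  ContDiffOn.sum fun α _ => (hX α).const_smul _

lemma lieDer_homField (hU : IsOpen U) {X : (Fin N → ℕ) → VF n}
    (hX : ∀ α, ContDiffOn ℝ (⊤ : ℕ∞) (X α) U) (t : Euc N) (j : ℕ) :
    lieDer U (homField X t j) = evalHom t j (fieldSeries U X) :=
  lieDer_sum_smul hU _ (fun α : Fin N →₀ ℕ => ∏ i, t i ^ α i) fun α => hX α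

lemma homField_zero {X : (Fin N → ℕ) → VF n} (hX : X 0 = 0) (t : Euc N) :
    homField X t 0 = 0 := by
  funext z
  simp [homField, hX]

lemma mem_multiIdxLt {M : ℕ} {α : Fin N → ℕ} : α ∈ multiIdxLt N M ↔ ∑ i, α i < M := by
  simp only [multiIdxLt, trunc, Finset.mem_filter, Finset.mem_image, Finset.mem_univ, true_and,
    and_iff_right_iff_imp]
  intro h
  refine ⟨fun i => ⟨α i, ?_⟩, rfl⟩
  have := Finset.single_le_sum (fun i _ => Nat.zero_le (α i)) (Finset.mem_univ i)
  omega

lemma sum_multiIdxLt {E : Type*} [AddCommMonoid E] (M : ℕ) (F : (Fin N → ℕ) → E) :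
    ∑ α ∈ multiIdxLt N M, F α =
      ∑ j ∈ Finset.range M, ∑ α ∈ Finset.finsuppAntidiag Finset.univ j, F α := by
  rw [Finset.sum_sigma']
  refine Finset.sum_bij' (fun α _ => ⟨∑ i, α i, Finsupp.equivFunOnFinite.symm α⟩)
    (fun x _ => ⇑x.2) ?_ ?_ ?_ ?_ ?_
  · intro α hα
    simpa [mem_finsuppAntidiag_univ, Finsupp.degree_eq_sum] using mem_multiIdxLt.1 hα
  · rintro ⟨j, α⟩ h
    simp only [Finset.mem_sigma, Finset.mem_range, mem_finsuppAntidiag_univ,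
      Finsupp.degree_eq_sum] at h
    rw [mem_multiIdxLt, h.2]
    exact h.1
  · intro α hα
    rfl
  · rintro ⟨j, α⟩ h
    simp only [Finset.mem_sigma, Finset.mem_range, mem_finsuppAntidiag_univ,
      Finsupp.degree_eq_sum] at h
    obtain ⟨-, rfl⟩ := h
    simp
  · intro α hα
    rfl

lemma sum_monomial_smul (X : (Fin N → ℕ) → VF n) (t : Euc N) (M : ℕ) (s : ℝ) (z : Euc n) :
    ∑ α ∈ multiIdxLt N M, Zhang.monomial α (s • t) • X α z =
      ∑ j ∈ Finset.range M, s ^ j • homField X t j z := by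
  rw [sum_multiIdxLt]
  refine Finset.sum_congr rfl fun j _ => ?_
  rw [homField, Finset.smul_sum]
  refine Finset.sum_congr rfl fun α hα => ?_
  rw [smul_smul]
  congr 1
  rw [mem_finsuppAntidiag_univ, Finsupp.degree_eq_sum] at hα
  simp [Zhang.monomial, mul_pow, Finset.prod_mul_distrib, Finset.prod_pow_eq_pow_sum, hα]

lemma sum_pow_smul_pow_succ_apply (M m : ℕ) (a : ℕ → Module.End ℝ (smoothFun U)) (s : ℝ)
    (f : smoothFun U) (x : Euc n) :
    (((∑ j ∈ Finset.range M, s ^ j • a j) ^ (m + 1)) f).1 x =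
      ∑ j ∈ Finset.range M, s ^ j * (((∑ j ∈ Finset.range M, s ^ j • a j) ^ m) (a j f)).1 x := by
  rw [pow_succ, Module.End.mul_apply, LinearMap.sum_apply, map_sum]
  simp

lemma exists_bound_pow_apply {K : Set (Euc n)} (hK : IsCompact K) (hKU : K ⊆ U) (M : ℕ)
    {a : ℕ → Module.End ℝ (smoothFun U)} (ha : a 0 = 0) (m : ℕ) (f : smoothFun U) :
    ∃ C : ℝ, 0 ≤ C ∧ ∀ s ∈ Set.Icc (0 : ℝ) 1, ∀ z ∈ K,
      |(((∑ j ∈ Finset.range M, s ^ j • a j) ^ m) f).1 z| ≤ C * s ^ m := by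
  induction m generalizing f with
  | zero =>
    obtain ⟨C, hC⟩ := hK.exists_bound_of_continuousOn (f.2.1.continuousOn.mono hKU)
    exact ⟨|C|, abs_nonneg C, fun s _ z hz => by simpa using (hC z hz).trans (le_abs_self C)⟩
  | succ m ih =>
    choose C hC0 hC using fun j => ih (a j f)
    refine ⟨∑ j ∈ Finset.range M, C j, Finset.sum_nonneg fun j _ => hC0 j, fun s hs z hz => ?_⟩
    rw [sum_pow_smul_pow_succ_apply, Finset.sum_mul]
    refine (Finset.abs_sum_le_sum_abs _ _).trans (Finset.sum_le_sum fun j _ => ?_)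
    rcases Nat.eq_zero_or_pos j with rfl | hj
    · rw [ha]
      simpa using mul_nonneg (hC0 0) (pow_nonneg hs.1 (m + 1))
    · rw [abs_mul, abs_of_nonneg (pow_nonneg hs.1 j)]
      calc s ^ j * _ ≤ s * (C j * s ^ m) :=
            mul_le_mul (pow_le_of_le_one hs.1 hs.2 hj.ne') (hC j s hs z hz) (abs_nonneg _) hs.1
        _ = C j * s ^ (m + 1) := by ring

lemma hasExpansion_pow_apply (M m : ℕ) (t : Euc N)
    (A : MvPowerSeries (Fin N) (Module.End ℝ (smoothFun U))) (f : smoothFun U) (x : Euc n) :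
    HasExpansion M
      (fun s => (((∑ j ∈ Finset.range M, s ^ j • evalHom t j A) ^ m) f).1 x)
      (fun k => (evalHom t k (A ^ m) f).1 x) := by
  induction m generalizing f with
  | zero =>
    cases M with
    | zero => simpa [HasExpansion] using isBigO_const_const (f.1 x) (one_ne_zero (α := ℝ)) _
    | succ M =>
      refine (isBigO_zero _ _).congr_left fun s => ?_
      simp [Finset.sum_range_succ', evalHom_one_zero, evalHom_one_of_ne]
  | succ m ih =>
    simp_rw [sum_pow_smul_pow_succ_apply]
    refine (HasExpansion.sum_pow_mul fun j _ => ih (evalHom t j A f)).congr_coeff fun k _ => ?_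
    rw [pow_succ, evalHom_mul, LinearMap.sum_apply]
    simp

lemma hasExpansion_expTrunc_apply (M M' : ℕ) (t : Euc N)
    (A : MvPowerSeries (Fin N) (Module.End ℝ (smoothFun U))) (f : smoothFun U) (x : Euc n) :
    HasExpansion M
      (fun s => ∑ m ∈ Finset.range M', (m.factorial : ℝ)⁻¹ *
        (((∑ j ∈ Finset.range M, s ^ j • evalHom t j A) ^ m) f).1 x)
      (fun k => (evalHom t k (expTrunc M' A) f).1 x) := by
  refine (HasExpansion.sum _ fun m _ =>
    (hasExpansion_pow_apply M m t A f x).const_mul _).congr_coeff fun k _ => ?_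
  rw [expTrunc, map_sum, LinearMap.sum_apply]
  simp

/-- Taylor's formula along the flow of a vector field. -/
lemma abs_sub_sum_le_of_flowsTo (hU : IsOpen U) {V : VF n} (hV : ContDiffOn ℝ (⊤ : ℕ∞) V U)
    {x y : Euc n} {r : ℝ} (hr : 0 < r) (hrU : closedBall x r ⊆ U)
    (hVr : ∀ z ∈ closedBall x r, ‖V z‖ < r) (hy : FlowsTo V x y) (M : ℕ) (f : smoothFun U) {B : ℝ}
    (hB : ∀ z ∈ closedBall x r, |((lieDer U V ^ M) f).1 z| ≤ B) :
    y ∈ closedBall x r ∧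
      |f.1 y - ∑ m ∈ Finset.range M, (m.factorial : ℝ)⁻¹ * ((lieDer U V ^ m) f).1 x| ≤ B := by
  obtain ⟨φ, h0, h1, hφ⟩ := hy
  have hmem : ∀ u ∈ Set.Icc (0 : ℝ) 1, φ u ∈ closedBall x r := by
    intro u hu
    have h2 : ‖φ u - x‖ ≤ r * u := by
      refine image_norm_le_of_norm_deriv_right_lt_deriv_boundary' (f := fun u => φ u - x)
        (f' := fun u => V (φ u)) (a := 0) (b := 1) (B := fun u => r * u) (B' := fun _ => r)
        ?_ ?_ ?_ ?_ ?_ ?_ hu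
      · exact fun v hv => ((hφ v hv).sub_const x).continuousAt.continuousWithinAt
      · exact fun v hv => ((hφ v ⟨hv.1, hv.2.le⟩).sub_const x).hasDerivWithinAt
      · simp [h0]
      · fun_prop
      · exact fun v _ => by simpa using ((hasDerivAt_id v).const_mul r).hasDerivWithinAt
      · intro v hv hvr
        refine hVr _ ?_
        rw [mem_closedBall_iff_norm, hvr]
        nlinarith [hv.2]
    rw [mem_closedBall_iff_norm]
    exact h2.trans (by nlinarith [hu.2])
  refine ⟨h1 ▸ hmem 1 (by simp), ?_⟩
  have h3 := taylor_chain_bound M (fun m u => ((lieDer U V ^ m) f).1 (φ u)) B ?_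
    (fun u hu => hB _ (hmem u hu)) 1 (by simp)
  · simpa [h0, h1] using h3
  · intro m _ u hu
    have hu' := hrU (hmem u hu)
    have h4 := (differentiableAt_smoothFun hU ((lieDer U V ^ m) f) hu').hasFDerivAt.comp_hasDerivAt
      u (hφ u hu)
    rwa [← lieDer_apply hU hV _ hu', ← Module.End.mul_apply, ← pow_succ'] at h4

lemma hasExpansion_of_isExpFieldsFor (hU : IsOpen U) {γ : Euc N → Euc n → Euc n}
    {Xh : (Fin N → ℕ) → VF n} (hXh : IsExpFieldsFor γ U Xh) {x : Euc n} (hx : x ∈ U) (t : Euc N)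
    (hγ : Tendsto (fun s : ℝ => γ (s • t) x) (𝓝[>] 0) (𝓝 x)) (M : ℕ) (f : smoothFun U) :
    HasExpansion M (fun s => f.1 (γ (s • t) x))
      (fun k => (evalHom t k (expTrunc M (fieldSeries U Xh)) f).1 x) := by
  obtain ⟨h0, hsm, hex⟩ := hXh
  obtain ⟨C, ε, hε, hex⟩ := hex M
  obtain ⟨K, S, hS, hK⟩ := ((contDiffAt_smoothFun hU f hx).of_le
    (by exact_mod_cast le_top)).exists_lipschitzOnWith
  obtain ⟨r, hr, hrS⟩ := Metric.nhds_basis_closedBall.mem_iff.1 (inter_mem (hU.mem_nhds hx) hS)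
  have hrU := hrS.trans Set.inter_subset_left
  have hcomp : IsCompact (closedBall x r) := isCompact_closedBall x r
  set V : ℝ → VF n := fun s z => ∑ j ∈ Finset.range M, s ^ j • homField Xh t j z with hVdef
  have hVsm : ∀ s, ContDiffOn ℝ (⊤ : ℕ∞) (V s) U := fun s =>
    ContDiffOn.sum fun j _ => (contDiffOn_homField hsm t j).const_smul _
  have hVD : ∀ s, lieDer U (V s) =
      ∑ j ∈ Finset.range M, s ^ j • evalHom t j (fieldSeries U Xh) := fun s => by
    rw [hVdef, lieDer_sum_smul hU _ _ fun j => contDiffOn_homField hsm t j]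
    simp only [lieDer_homField hU hsm]
  have hev0 : evalHom t 0 (fieldSeries U Xh) = 0 := by
    rw [← lieDer_homField hU hsm, homField_zero h0, lieDer_zero hU]
  obtain ⟨B, hB0, hB⟩ := exists_bound_pow_apply hcomp hrU M
    (a := fun j => evalHom t j (fieldSeries U Xh)) hev0 M f
  choose Q hQ using fun j => hcomp.exists_bound_of_continuousOn
    ((contDiffOn_homField hsm t j).continuousOn.mono hrU)
  have hVbd : ∀ s ∈ Set.Icc (0 : ℝ) 1, ∀ z ∈ closedBall x r,
      ‖V s z‖ ≤ s * ∑ j ∈ Finset.range M, |Q j| := by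
    intro s hs z hz
    rw [Finset.mul_sum]
    refine (norm_sum_le _ _).trans (Finset.sum_le_sum fun j _ => ?_)
    rcases Nat.eq_zero_or_pos j with rfl | hj
    · rw [homField_zero h0]
      simpa using mul_nonneg hs.1 (abs_nonneg (Q 0))
    · rw [norm_smul, Real.norm_of_nonneg (pow_nonneg hs.1 j)]
      exact mul_le_mul (pow_le_of_le_one hs.1 hs.2 hj.ne') ((hQ j z hz).trans (le_abs_self _))
        (norm_nonneg _) hs.1
  have hev1 : ∀ᶠ s : ℝ in 𝓝[>] 0, s * ∑ j ∈ Finset.range M, |Q j| < r := by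
    have : Tendsto (fun s : ℝ => s * ∑ j ∈ Finset.range M, |Q j|) (𝓝 0) (𝓝 (0 * _)) :=
      tendsto_id.mul_const _
    rw [zero_mul] at this
    exact (this.mono_left nhdsWithin_le_nhds).eventually_lt_const hr
  have hev2 : ∀ᶠ s : ℝ in 𝓝[>] 0, s • t ∈ ball (0 : Euc N) ε := by
    have : Tendsto (fun s : ℝ => s • t) (𝓝 0) (𝓝 ((0 : ℝ) • t)) := tendsto_id.smul_const t
    rw [zero_smul] at this
    exact (this.mono_left nhdsWithin_le_nhds).eventually (ball_mem_nhds 0 hε)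
  refine (hasExpansion_expTrunc_apply M M t (fieldSeries U Xh) f x).congr' ?_
  refine IsBigO.of_bound (K * (C * ‖t‖ ^ M) + B) ?_
  filter_upwards [hev1, hev2, Ioo_mem_nhdsGT (zero_lt_one' ℝ), hγ (closedBall_mem_nhds x hr)]
    with s hs1 hs2 hs hsγ
  obtain ⟨y, hy, hyγ⟩ := hex _ hs2 x hx
  have hs' : s ∈ Set.Icc (0 : ℝ) 1 := ⟨hs.1.le, hs.2.le⟩
  simp only [sum_monomial_smul] at hy
  obtain ⟨hyr, hyB⟩ := abs_sub_sum_le_of_flowsTo hU (hVsm s) hr hrU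
    (fun z hz => (hVbd s hs' z hz).trans_lt hs1) hy M f (B := B * s ^ M)
    (by rw [hVD]; exact hB s hs')
  have h1 : |f.1 (γ (s • t) x) - f.1 y| ≤ K * (C * ‖t‖ ^ M) * s ^ M := by
    have h2 := hK.dist_le_mul _ (hrS hsγ).2 _ (hrS hyr).2
    rw [Real.dist_eq, dist_eq_norm] at h2
    refine h2.trans ?_
    rw [mul_assoc]
    refine mul_le_mul_of_nonneg_left (hyγ.trans_eq ?_) K.2
    rw [norm_smul, Real.norm_of_nonneg hs.1.le]
    ring
  rw [hVD] at hyB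
  rw [Real.norm_eq_abs, Real.norm_of_nonneg (pow_nonneg hs.1.le M), add_mul]
  refine le_trans ?_ (add_le_add h1 hyB)
  refine le_trans (le_of_eq ?_) (abs_add_le _ _)
  congr 1
  ring

lemma hasDerivAt_of_isWFor {γ : Euc N → Euc n → Euc n} {ρ : ℝ} {W : Euc N → Euc n → Euc n}
    (hW : IsWFor γ ρ U W) {x : Euc n} (hx : x ∈ U) {t : Euc N} {s : ℝ} (hs : s ≠ 0)
    (hst : s • t ∈ ball (0 : Euc N) ρ) (hy : γ (s • t) x ∈ U) :
    HasDerivAt (fun σ : ℝ => γ (σ • t) x) (s⁻¹ • W (s • t) (γ (s • t) x)) s := by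
  obtain ⟨γinv, hinv, hder⟩ := hW
  have h1 := hder _ hst _ hy
  rw [(hinv _ hst _ hx).2] at h1
  have h2 : HasDerivAt (fun σ : ℝ => σ * s⁻¹) s⁻¹ s := by
    simpa using (hasDerivAt_id s).mul_const s⁻¹
  rw [← mul_inv_cancel₀ hs] at h1
  refine (h1.scomp s h2).congr_of_eventuallyEq (Eventually.of_forall fun σ => ?_)
  simp [smul_smul, hs]

lemma hasExpansion_of_isTaylorFieldOf (hU : IsOpen U) {W : Euc N → Euc n → Euc n}
    {X : (Fin N → ℕ) → VF n} (hX : IsTaylorFieldOf W U X) {x : Euc n} (hx : x ∈ U) (t : Euc N)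
    {y : ℝ → Euc n} (hy : Tendsto y (𝓝[>] 0) (𝓝 x)) {M : ℕ}
    {T : MvPowerSeries (Fin N) (Module.End ℝ (smoothFun U))}
    (hT : ∀ f : smoothFun U, HasExpansion M (fun s => f.1 (y s)) fun k => (evalHom t k T f).1 x)
    (f : smoothFun U) :
    HasExpansion M (fun s => fderiv ℝ f.1 (y s) (W (s • t) (y s)))
      (fun k => (evalHom t k (T * fieldSeries U X) f).1 x) := by
  obtain ⟨h0, hsm, hex⟩ := hX
  obtain ⟨C, ε, hε, hex⟩ := hex M
  have hev1 : ∀ᶠ s : ℝ in 𝓝[>] 0, s • t ∈ ball (0 : Euc N) ε := by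
    have : Tendsto (fun s : ℝ => s • t) (𝓝 0) (𝓝 ((0 : ℝ) • t)) := tendsto_id.smul_const t
    rw [zero_smul] at this
    exact (this.mono_left nhdsWithin_le_nhds).eventually (ball_mem_nhds 0 hε)
  have hcont : ContinuousAt (fderiv ℝ f.1) x :=
    (f.2.1.continuousOn_fderiv_of_isOpen hU (by simp)).continuousAt (hU.mem_nhds hx)
  have hev2 : ∀ᶠ s : ℝ in 𝓝[>] 0, ‖fderiv ℝ f.1 (y s)‖ < ‖fderiv ℝ f.1 x‖ + 1 :=
    (hcont.tendsto.comp hy).norm.eventually_lt_const (by simp)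
  refine ((HasExpansion.sum_pow_mul fun j _ =>
    hT (evalHom t j (fieldSeries U X) f)).congr_coeff fun k _ => ?_).congr'
    (h := fun s => ∑ j ∈ Finset.range M, s ^ j * (evalHom t j (fieldSeries U X) f).1 (y s)) ?_
  · rw [evalHom_mul, LinearMap.sum_apply]
    simp
  refine IsBigO.of_bound ((‖fderiv ℝ f.1 x‖ + 1) * (C * ‖t‖ ^ M)) ?_
  filter_upwards [hev1, hev2, self_mem_nhdsWithin, hy (hU.mem_nhds hx)] with s hs1 hs2 hs hyU
  have hs0 : 0 ≤ s := le_of_lt hs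
  have h1 : ∑ j ∈ Finset.range M, s ^ j * (evalHom t j (fieldSeries U X) f).1 (y s) =
      fderiv ℝ f.1 (y s) (∑ α ∈ multiIdxLt N M, Zhang.monomial α (s • t) • X α (y s)) := by
    rw [sum_monomial_smul, map_sum]
    refine Finset.sum_congr rfl fun j _ => ?_
    rw [map_smul, smul_eq_mul, ← lieDer_apply hU (contDiffOn_homField hsm t j) f hyU,
      lieDer_homField hU hsm]
  have h2 := hex _ hs1 _ hyU
  rw [norm_smul, Real.norm_of_nonneg hs0] at h2
  rw [h1, ← map_sub, Real.norm_of_nonneg (pow_nonneg hs0 M)]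
  calc _ ≤ ‖fderiv ℝ f.1 (y s)‖ * _ := ContinuousLinearMap.le_opNorm _ _
    _ ≤ (‖fderiv ℝ f.1 x‖ + 1) * (C * (s * ‖t‖) ^ M) :=
      mul_le_mul hs2.le h2 (norm_nonneg _) (by positivity)
    _ = _ := by ring

lemma natCast_mul_evalHom_expTrunc (hU : IsOpen U) {γ : Euc N → Euc n → Euc n} {ρ : ℝ}
    (hρ : 0 < ρ) {W : Euc N → Euc n → Euc n} (hW : IsWFor γ ρ U W) {X Xh : (Fin N → ℕ) → VF n}
    (hX : IsTaylorFieldOf W U X) (hXh : IsExpFieldsFor γ U Xh) {x : Euc n} (hx : x ∈ U)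
    (t : Euc N) (hγ0 : γ 0 x = x) (hγ : ContinuousAt (fun s : ℝ => γ (s • t) x) 0) {M k : ℕ}
    (hk : k < M) (f : smoothFun U) :
    k * (evalHom t k (expTrunc M (fieldSeries U Xh)) f).1 x =
      (evalHom t k (expTrunc M (fieldSeries U Xh) * fieldSeries U X) f).1 x := by
  have hγt : Tendsto (fun s : ℝ => γ (s • t) x) (𝓝 0) (𝓝 x) := by
    simpa [ContinuousAt, hγ0] using hγ
  have hγt' := hγt.mono_left (nhdsWithin_le_nhds (s := Set.Ioi 0))
  have hev1 : ∀ᶠ s : ℝ in 𝓝 0, s • t ∈ ball (0 : Euc N) ρ := by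
    have : Tendsto (fun s : ℝ => s • t) (𝓝 0) (𝓝 ((0 : ℝ) • t)) := tendsto_id.smul_const t
    rw [zero_smul] at this
    exact this.eventually (ball_mem_nhds 0 hρ)
  obtain ⟨δ, hδ, hδ'⟩ := Metric.eventually_nhds_iff_ball.1
    (hev1.and (hγt.eventually (hU.mem_nhds hx)))
  have hball : ∀ s ∈ Set.Ico 0 δ, s ∈ ball (0 : ℝ) δ := fun s hs => by
    rw [mem_ball_zero_iff, Real.norm_of_nonneg hs.1]
    exact hs.2
  have hderiv : ∀ s ∈ Set.Ioo 0 δ, HasDerivAt (fun s => f.1 (γ (s • t) x))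
      (fderiv ℝ f.1 (γ (s • t) x) (s⁻¹ • W (s • t) (γ (s • t) x))) s := fun s hs => by
    obtain ⟨h1, h2⟩ := hδ' s (hball s ⟨hs.1.le, hs.2⟩)
    exact (differentiableAt_smoothFun hU f h2).hasFDerivAt.comp_hasDerivAt s
      (hasDerivAt_of_isWFor hW hx hs.1.ne' h1 h2)
  have hcont : ContinuousOn (fun s => f.1 (γ (s • t) x)) (Set.Ico 0 δ) := by
    intro s hs
    rcases hs.1.eq_or_lt with rfl | h0
    · refine ContinuousAt.continuousWithinAt (ContinuousAt.comp (g := f.1) ?_ hγ)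
      simpa [hγ0] using (differentiableAt_smoothFun hU f hx).continuousAt
    · exact (hderiv s ⟨h0, hs.2⟩).continuousAt.continuousWithinAt
  have hexp := hasExpansion_of_isExpFieldsFor hU hXh hx t hγt' M
  refine HasExpansion.euler hδ hcont hderiv (hexp f)
    ((hasExpansion_of_isTaylorFieldOf hU hX hx t hγt' hexp f).congr' ?_) ?_ hk
  · refine (isBigO_zero _ _).congr' ?_ EventuallyEq.rfl
    filter_upwards [self_mem_nhdsWithin] with s hs
    have hs0 : s ≠ 0 := ne_of_gt hs
    simp [hs0]
  · rw [evalHom_mul, Finset.Nat.antidiagonal_zero, Finset.sum_singleton,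
      ← lieDer_homField hU hX.2.1, homField_zero hX.1, lieDer_zero hU]
    simp

lemma eqUpTo_euler_expTrunc (hU : IsOpen U) {γ : Euc N → Euc n → Euc n} {ρ : ℝ}
    (hρ : 0 < ρ) {W : Euc N → Euc n → Euc n} (hW : IsWFor γ ρ U W) {X Xh : (Fin N → ℕ) → VF n}
    (hX : IsTaylorFieldOf W U X) (hXh : IsExpFieldsFor γ U Xh) (hγ0 : ∀ x ∈ U, γ 0 x = x)
    (hγ : ∀ x ∈ U, ContinuousAt (fun t => γ t x) 0) (M : ℕ) :
    EqUpTo M (euler (expTrunc M (fieldSeries U Xh)))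
      (expTrunc M (fieldSeries U Xh) * fieldSeries U X) := by
  intro α hα
  refine LinearMap.ext fun f => smoothFun_ext fun x hx => ?_
  have key : ∀ (p : MvPowerSeries (Fin N) (Module.End ℝ (smoothFun U))) (t : Fin N → ℝ),
      (evalHom t α.degree p f).1 x = ∑ β ∈ Finset.finsuppAntidiag Finset.univ α.degree,
        (∏ i, t i ^ β i) * (MvPowerSeries.coeff β p f).1 x := fun p t => by
    rw [evalHom_apply, LinearMap.sum_apply]
    simp
  refine eq_of_sum_eq
    (c := fun α => (MvPowerSeries.coeff α (euler (expTrunc M (fieldSeries U Xh))) f).1 x)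
    (d := fun α => (MvPowerSeries.coeff α
      (expTrunc M (fieldSeries U Xh) * fieldSeries U X) f).1 x) (fun t => ?_) α rfl
  rw [← key, ← key, evalHom_euler, LinearMap.smul_apply]
  refine natCast_mul_evalHom_expTrunc hU hρ hW hX hXh hx (WithLp.toLp 2 t) (hγ0 x hx) ?_ hα f
  refine ContinuousAt.comp (g := fun t => γ t x) ?_ (by fun_prop)
  simpa using hγ x hx

end Expansion

/-! ### Lie algebras generated by graded families of vector fields -/

section Generated
open FormalLog

variable {N ν n : ℕ} {U : Set (Euc n)}

/-- The span of the derivations given by the elements of `ℒ(S)` of degree `d`. -/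
def lieDegSpan (U : Set (Euc n)) (S : Set (VF n × Deg ν)) (d : Deg ν) :
    Submodule ℝ (Module.End ℝ (smoothFun U)) :=
  Submodule.span ℝ (lieDer U '' {Y | (Y, d) ∈ lieSpan S})

lemma contDiffOn_of_mem_lieSpan (hU : IsOpen U) {S : Set (VF n × Deg ν)}
    (hS : ∀ P ∈ S, ContDiffOn ℝ (⊤ : ℕ∞) P.1 U) {P : VF n × Deg ν} (hP : P ∈ lieSpan S) :
    ContDiffOn ℝ (⊤ : ℕ∞) P.1 U := by
  induction hP with
  | base h => exact hS _ h
  | bracket _ _ h1 h2 => exact contDiffOn_lieBracket hU h1 h2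

lemma lie_mem_lieDegSpan (hU : IsOpen U) {S : Set (VF n × Deg ν)}
    (hS : ∀ P ∈ S, ContDiffOn ℝ (⊤ : ℕ∞) P.1 U) {d d' : Deg ν}
    {a b : Module.End ℝ (smoothFun U)} (ha : a ∈ lieDegSpan U S d) (hb : b ∈ lieDegSpan U S d') :
    ⁅a, b⁆ ∈ lieDegSpan U S (d + d') := by
  induction ha, hb using Submodule.span_induction₂ with
  | mem_mem a b ha hb =>
    obtain ⟨Y, hY, rfl⟩ := ha
    obtain ⟨Z, hZ, rfl⟩ := hb
    rw [← lieDer_lieBracket hU (contDiffOn_of_mem_lieSpan hU hS hY)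
      (contDiffOn_of_mem_lieSpan hU hS hZ)]
    exact Submodule.subset_span ⟨_, LieGen.bracket hY hZ, rfl⟩
  | zero_left b hb => simp [Ring.lie_def]
  | zero_right a ha => simp [Ring.lie_def]
  | add_left a a' b _ _ _ h1 h2 =>
    convert add_mem h1 h2 using 1
    simp only [Ring.lie_def]
    noncomm_ring
  | add_right a b b' _ _ _ h1 h2 =>
    convert add_mem h1 h2 using 1
    simp only [Ring.lie_def]
    noncomm_ring
  | smul_left c a b _ _ h =>
    convert Submodule.smul_mem _ c h using 1
    simp [Ring.lie_def, smul_sub]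
  | smul_right c a b _ _ h =>
    convert Submodule.smul_mem _ c h using 1
    simp [Ring.lie_def, smul_sub]

lemma lieDer_mem_lieDegSpan (hU : IsOpen U) {S S' : Set (VF n × Deg ν)}
    (hS : ∀ P ∈ S, ContDiffOn ℝ (⊤ : ℕ∞) P.1 U) (hS' : ∀ P ∈ S', ContDiffOn ℝ (⊤ : ℕ∞) P.1 U)
    (h : ∀ P ∈ S, lieDer U P.1 ∈ lieDegSpan U S' P.2) {P : VF n × Deg ν} (hP : P ∈ lieSpan S) :
    lieDer U P.1 ∈ lieDegSpan U S' P.2 := by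
  induction hP with
  | base hP => exact h _ hP
  | bracket hX hY h1 h2 =>
    rw [lieDer_lieBracket hU (contDiffOn_of_mem_lieSpan hU hS hX)
      (contDiffOn_of_mem_lieSpan hU hS hY)]
    exact lie_mem_lieDegSpan hU hS' h1 h2

lemma isConstCombOf_of_mem_lieDegSpan (hU : IsOpen U) (h0 : (0 : Euc n) ∈ U)
    {S : Set (VF n × Deg ν)} (hS : ∀ P ∈ S, ContDiffOn ℝ (⊤ : ℕ∞) P.1 U) {P : VF n × Deg ν}
    (hPU : ContDiffOn ℝ (⊤ : ℕ∞) P.1 U) (hP : lieDer U P.1 ∈ lieDegSpan U S P.2) :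
    IsConstCombOf (lieSpan S) P := by
  obtain ⟨k, c, g, hg⟩ := Submodule.mem_span_set'.1 hP
  choose Y hY hYg using fun j => (g j).2
  refine ⟨k, c, Y, hY, U, hU, h0, fun x hx => ?_⟩
  ext i
  rw [← lieDer_coordFun hU hPU i hx, ← hg]
  simp only [LinearMap.sum_apply, LinearMap.smul_apply, Submodule.coe_sum, Submodule.coe_smul,
    Finset.sum_apply, Pi.smul_apply, ← hYg,
    WithLp.ofLp_sum, WithLp.ofLp_smul]
  exact Finset.sum_congr rfl fun j _ => by
    rw [lieDer_coordFun hU (contDiffOn_of_mem_lieSpan hU hS (hY j)) i hx]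

/-- The coefficient fields whose degree satisfies `Q`, paired with their degree. -/
def coeffSet (e : Fin N → Fin ν → ℝ) (Q : Deg ν → Prop) (X : (Fin N → ℕ) → VF n) :
    Set (VF n × Deg ν) :=
  {P | ∃ α : Fin N → ℕ, α ≠ 0 ∧ Q (degMulti e α) ∧ P = (X α, degMulti e α)}

lemma pureSet_union_nonpureSet (e : Fin N → Fin ν → ℝ) (X : (Fin N → ℕ) → VF n) :
    pureSet e X ∪ nonpureSet e X = coeffSet e (fun _ => True) X := by
  ext P
  simp only [pureSet, nonpureSet, coeffSet, Set.mem_union, Set.mem_ofPred_eq]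
  constructor
  · rintro (⟨α, h, -, h'⟩ | ⟨α, h, -, h'⟩) <;> exact ⟨α, h, trivial, h'⟩
  · rintro ⟨α, h, -, h'⟩
    by_cases hα : IsPureDeg (degMulti e α)
    · exact Or.inl ⟨α, h, hα, h'⟩
    · exact Or.inr ⟨α, h, hα, h'⟩

lemma degMulti_add (e : Fin N → Fin ν → ℝ) (α β : Fin N → ℕ) :
    degMulti e (α + β) = degMulti e α + degMulti e β := by
  funext μ
  simp [degMulti, add_mul, Finset.sum_add_distrib]

lemma degMulti_nonneg {e : Fin N → Fin ν → ℝ} (he : AdmissibleE e) (α : Fin N → ℕ) (μ : Fin ν) :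
    0 ≤ degMulti e α μ :=
  Finset.sum_nonneg fun i _ => mul_nonneg (Nat.cast_nonneg _) (he.1 i μ)

lemma exists_degMulti_ne_zero {e : Fin N → Fin ν → ℝ} (he : AdmissibleE e) {α : Fin N → ℕ}
    (hα : α ≠ 0) : ∃ μ, degMulti e α μ ≠ 0 := by
  obtain ⟨i, hi⟩ := Function.ne_iff.1 hα
  obtain ⟨μ, hμ⟩ := he.2.1 i
  refine ⟨μ, ne_of_gt (Finset.sum_pos' (fun j _ => mul_nonneg (Nat.cast_nonneg _) (he.1 j μ))
    ⟨i, Finset.mem_univ i, mul_pos ?_ ((he.1 i μ).lt_of_ne' hμ)⟩)⟩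
  exact_mod_cast Nat.pos_of_ne_zero hi

lemma isPureDeg_left_of_add {e : Fin N → Fin ν → ℝ} (he : AdmissibleE e) {α β : Fin N → ℕ}
    (hα : α ≠ 0) (h : IsPureDeg (degMulti e α + degMulti e β)) : IsPureDeg (degMulti e α) := by
  obtain ⟨μ, -, hμ⟩ := h
  have h1 : ∀ κ, degMulti e α κ ≠ 0 → κ = μ := fun κ hκ => hμ κ <| ne_of_gt <|
    add_pos_of_pos_of_nonneg ((degMulti_nonneg he α κ).lt_of_ne' hκ) (degMulti_nonneg he β κ)
  obtain ⟨κ, hκ⟩ := exists_degMulti_ne_zero he hα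
  exact ⟨κ, hκ, fun κ' h' => (h1 κ' h').trans (h1 κ hκ).symm⟩

lemma contDiffOn_of_mem_coeffSet {e : Fin N → Fin ν → ℝ} {Q : Deg ν → Prop}
    {X : (Fin N → ℕ) → VF n} (hX : ∀ α, ContDiffOn ℝ (⊤ : ℕ∞) (X α) U) :
    ∀ P ∈ coeffSet e Q X, ContDiffOn ℝ (⊤ : ℕ∞) P.1 U := by
  rintro _ ⟨α, -, -, rfl⟩
  exact hX α

open Classical in
/-- The grading of the derivations generated by the coefficient fields `X_α` whose degree
satisfies `Q`; nothing is required in the degrees which do not satisfy `Q`. -/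
def coeffGrading (U : Set (Euc n)) (e : Fin N → Fin ν → ℝ) (Q : Deg ν → Prop)
    (X : (Fin N → ℕ) → VF n) (α : Fin N →₀ ℕ) : Submodule ℝ (Module.End ℝ (smoothFun U)) :=
  if α = 0 then ⊥ else
    if Q (degMulti e α) then lieDegSpan U (coeffSet e Q X) (degMulti e α) else ⊤

lemma isLieGraded_coeffGrading (hU : IsOpen U) {e : Fin N → Fin ν → ℝ} {Q : Deg ν → Prop}
    (hQ : ∀ α β : Fin N → ℕ, α ≠ 0 → Q (degMulti e α + degMulti e β) → Q (degMulti e α))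
    {X : (Fin N → ℕ) → VF n} (hX : ∀ α, ContDiffOn ℝ (⊤ : ℕ∞) (X α) U) :
    IsLieGraded (R := Module.End ℝ (smoothFun U)) (coeffGrading U e Q X) := by
  intro β γ a b ha hb
  by_cases hβ : β = 0
  · rw [coeffGrading, if_pos hβ, Submodule.mem_bot] at ha
    simp [ha, Ring.lie_def]
  by_cases hγ : γ = 0
  · rw [coeffGrading, if_pos hγ, Submodule.mem_bot] at hb
    simp [hb, Ring.lie_def]
  have hβγ : β + γ ≠ 0 := fun h => hβ (by simpa using (add_eq_zero.1 h).1)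
  have hdeg : degMulti e ⇑(β + γ) = degMulti e β + degMulti e γ := degMulti_add e β γ
  rw [coeffGrading, if_neg hβγ]
  split_ifs with h
  · rw [hdeg] at h ⊢
    have h1 : Q (degMulti e β) := hQ β γ (by simpa using hβ) h
    have h2 : Q (degMulti e γ) := hQ γ β (by simpa using hγ) (by rwa [add_comm])
    rw [coeffGrading, if_neg hβ, if_pos h1] at ha
    rw [coeffGrading, if_neg hγ, if_pos h2] at hb
    exact lie_mem_lieDegSpan hU (contDiffOn_of_mem_coeffSet hX) ha hb
  · trivial

lemma coeff_fieldSeries_mem_coeffGrading (hU : IsOpen U) (e : Fin N → Fin ν → ℝ)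
    (Q : Deg ν → Prop) {X : (Fin N → ℕ) → VF n} (hX : X 0 = 0) (α : Fin N →₀ ℕ) :
    MvPowerSeries.coeff α (fieldSeries U X) ∈ coeffGrading U e Q X α := by
  rw [coeffGrading, coeff_fieldSeries]
  split_ifs with h0 h
  · rw [h0, Finsupp.coe_zero, hX, lieDer_zero hU]
    exact zero_mem _
  · exact Submodule.subset_span ⟨_, LieGen.base ⟨α, by simpa using h0, h, rfl⟩, rfl⟩
  · trivial

lemma isConstCombOf_of_coeff_mem (hU : IsOpen U) (h0 : (0 : Euc n) ∈ U)
    {e : Fin N → Fin ν → ℝ} {Q : Deg ν → Prop} {X Y : (Fin N → ℕ) → VF n}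
    (hX : ∀ α, ContDiffOn ℝ (⊤ : ℕ∞) (X α) U) (hY : ∀ α, ContDiffOn ℝ (⊤ : ℕ∞) (Y α) U)
    (h : ∀ α, MvPowerSeries.coeff α (fieldSeries U X) ∈ coeffGrading U e Q Y α) :
    ∀ P ∈ lieSpan (coeffSet e Q X), IsConstCombOf (lieSpan (coeffSet e Q Y)) P := by
  intro P hP
  have hX' := contDiffOn_of_mem_coeffSet (e := e) (Q := Q) hX
  have hY' := contDiffOn_of_mem_coeffSet (e := e) (Q := Q) hY
  refine isConstCombOf_of_mem_lieDegSpan hU h0 hY' (contDiffOn_of_mem_lieSpan hU hX' hP)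
    (lieDer_mem_lieDegSpan hU hX' hY' ?_ hP)
  rintro _ ⟨α, hα, hQα, rfl⟩
  have h1 := h (Finsupp.equivFunOnFinite.symm α)
  have h2 : Finsupp.equivFunOnFinite.symm α ≠ 0 := fun h2 => hα (DFunLike.coe_fn_eq.2 h2)
  rwa [coeffGrading, if_neg h2, if_pos (by simpa using hQα)] at h1

lemma isConstCombOf_iff_of_eqUpTo (hU : IsOpen U) (h0 : (0 : Euc n) ∈ U)
    {e : Fin N → Fin ν → ℝ} {Q : Deg ν → Prop}
    (hQ : ∀ α β : Fin N → ℕ, α ≠ 0 → Q (degMulti e α + degMulti e β) → Q (degMulti e α))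
    {X Xh : (Fin N → ℕ) → VF n} (hX0 : X 0 = 0) (hX : ∀ α, ContDiffOn ℝ (⊤ : ℕ∞) (X α) U)
    (hXh0 : Xh 0 = 0) (hXh : ∀ α, ContDiffOn ℝ (⊤ : ℕ∞) (Xh α) U)
    (h : ∀ M, EqUpTo M (euler (expTrunc M (fieldSeries U Xh)))
      (expTrunc M (fieldSeries U Xh) * fieldSeries U X)) :
    (∀ P ∈ lieSpan (coeffSet e Q X), IsConstCombOf (lieSpan (coeffSet e Q Xh)) P) ∧
      ∀ P ∈ lieSpan (coeffSet e Q Xh), IsConstCombOf (lieSpan (coeffSet e Q X)) P := by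
  have hA := orderGe_fieldSeries hU hXh0
  exact ⟨isConstCombOf_of_coeff_mem hU h0 hX hXh
      ((coeff_mem_iff (isLieGraded_coeffGrading hU hQ hXh) hA fun M _ => h M).1
        (coeff_fieldSeries_mem_coeffGrading hU e Q hXh0)),
    isConstCombOf_of_coeff_mem hU h0 hXh hX
      ((coeff_mem_iff (isLieGraded_coeffGrading hU hQ hX) hA fun M _ => h M).2
        (coeff_fieldSeries_mem_coeffGrading hU e Q hX0))⟩

end Generated

/-- Theorem 6.5: equivalence of the families `{X_α}` and `{X̂_α}`. -/
theorem statement_9 {N ν n : ℕ} (hn : 0 < n)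
    (e : Fin N → Fin ν → ℝ) (he : AdmissibleE e)
    (γ : Euc N → Euc n → Euc n) (ρ₀ : ℝ) (hρ₀ : 0 < ρ₀)
    (U₀ : Set (Euc n)) (hU₀ : IsOpen U₀) (h0U₀ : (0 : Euc n) ∈ U₀)
    (hγ : ContDiffOn ℝ (⊤ : ℕ∞) (fun q : Euc N × Euc n => γ q.1 q.2) (ball 0 ρ₀ ×ˢ U₀))
    (hγ0 : ∀ x ∈ U₀, γ 0 x = x)
    (ρ₁ : ℝ) (U₁ : Set (Euc n)) (hρ₁ : 0 < ρ₁) (hρ₁' : ρ₁ ≤ ρ₀)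
    (hU₁ : IsOpen U₁) (h0U₁ : (0 : Euc n) ∈ U₁) (hU₁' : U₁ ⊆ U₀)
    (W : Euc N → Euc n → Euc n) (hW : IsWFor γ ρ₁ U₁ W)
    (X : (Fin N → ℕ) → VF n) (hX : IsTaylorFieldOf W U₁ X)
    (Xh : (Fin N → ℕ) → VF n) (hXh : IsExpFieldsFor γ U₁ Xh) :
    (∀ P ∈ lieSpan (pureSet e X ∪ nonpureSet e X),
        IsConstCombOf (lieSpan (pureSet e Xh ∪ nonpureSet e Xh)) P) ∧
    (∀ P ∈ lieSpan (pureSet e X), IsConstCombOf (lieSpan (pureSet e Xh)) P) ∧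
    (∀ P ∈ lieSpan (pureSet e Xh ∪ nonpureSet e Xh),
        IsConstCombOf (lieSpan (pureSet e X ∪ nonpureSet e X)) P) ∧
    (∀ P ∈ lieSpan (pureSet e Xh), IsConstCombOf (lieSpan (pureSet e X)) P) := by
  have hγ0' : ∀ x ∈ U₁, γ 0 x = x := fun x hx => hγ0 x (hU₁' hx)
  have hcont : ∀ x ∈ U₁, ContinuousAt (fun t => γ t x) 0 := fun x hx => by
    have h1 : ContinuousAt (fun q : Euc N × Euc n => γ q.1 q.2) (0, x) :=
      hγ.continuousOn.continuousAt
        (prod_mem_nhds (ball_mem_nhds 0 hρ₀) (hU₀.mem_nhds (hU₁' hx)))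
    exact ContinuousAt.comp (g := fun q : Euc N × Euc n => γ q.1 q.2)
      (f := fun t : Euc N => (t, x)) h1 (by fun_prop)
  have heq := eqUpTo_euler_expTrunc hU₁ hρ₁ hW hX hXh hγ0' hcont
  have hall := isConstCombOf_iff_of_eqUpTo (e := e) (Q := fun _ => True) hU₁ h0U₁
    (fun _ _ _ _ => trivial) hX.1 hX.2.1 hXh.1 hXh.2.1 heq
  have hpure := isConstCombOf_iff_of_eqUpTo (e := e) (Q := IsPureDeg) hU₁ h0U₁
    (fun _ _ hα h => isPureDeg_left_of_add he hα h) hX.1 hX.2.1 hXh.1 hXh.2.1 heq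
  rw [pureSet_union_nonpureSet, pureSet_union_nonpureSet]
  exact ⟨hall.1, hpure.1, hall.2, hpure.2⟩
end
end

section
/- Let e = {(1,0),(0,1)} (so that 𝒦(2,e,a,2) is a class of product kernels supported in B²(a)). For every a > 0 there exists K ∈ 𝒦(2,e,a,2) such that the operator T_K f(x) = ∫f(x − s³ − t³ − st)K(s,t)ds dt is not bounded on L²(ℝ). -/
open MeasureTheory Metric Filter Set
open scoped ENNReal NNReal Topology

noncomputable section

open Zhang

/-- The product-kernel dilation data on `ℝ²`: `e = {(1,0),(0,1)}`. -/
def eProd : Fin 2 → Fin 2 → ℝ := fun i μ => if i = μ then 1 else 0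

/-! ### Product kernels built from an odd bump -/

/-- The odd test function `u ↦ u b(u)` attached to a bump function `b` centred at `0`. -/
def oddBump (b : ContDiffBump (0 : ℝ)) (u : ℝ) : ℝ := u * b u

/-- The tensor product of an odd bump with itself, as a function on the plane. -/
def oddBumpTensor (b : ContDiffBump (0 : ℝ)) (t : Euc 2) : ℝ := oddBump b (t 0) * oddBump b (t 1)

/-- The indices `(6m + i, 6m - i)` with `0 ≤ i ≤ m` and `m` a power of two. -/
def IsDyadicBlockIndex (k : Fin 2 → ℕ) : Prop :=
  ∃ j : ℕ, k 0 + k 1 = 12 * 2 ^ j ∧ 6 * 2 ^ j ≤ k 0 ∧ k 0 ≤ 7 * 2 ^ j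

open Classical in
/-- The kernel sequence equal to `oddBumpTensor b` on the dyadic blocks and to `0` elsewhere. -/
def blockKernel (b : ContDiffBump (0 : ℝ)) (k : Fin 2 → ℕ) : Euc 2 → ℝ :=
  if IsDyadicBlockIndex k then oddBumpTensor b else 0

theorem oddBump_neg (b : ContDiffBump (0 : ℝ)) (u : ℝ) : oddBump b (-u) = -oddBump b u := by
  simp [oddBump, b.neg]

theorem contDiff_oddBump (b : ContDiffBump (0 : ℝ)) : ContDiff ℝ (⊤ : ℕ∞) (oddBump b) :=
  contDiff_id.mul b.contDiff

theorem hasCompactSupport_oddBump (b : ContDiffBump (0 : ℝ)) : HasCompactSupport (oddBump b) :=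
  b.hasCompactSupport.mul_left

theorem oddBump_eq_zero (b : ContDiffBump (0 : ℝ)) {u : ℝ} (hu : b.rOut ≤ |u|) :
    oddBump b u = 0 := by
  rw [oddBump, b.zero_of_le_dist (by simpa using hu), mul_zero]

theorem contDiff_oddBumpTensor (b : ContDiffBump (0 : ℝ)) :
    ContDiff ℝ (⊤ : ℕ∞) (oddBumpTensor b) := by
  unfold oddBumpTensor
  exact ((contDiff_oddBump b).comp (by fun_prop)).mul ((contDiff_oddBump b).comp (by fun_prop))

theorem tsupport_oddBumpTensor_subset (b : ContDiffBump (0 : ℝ)) :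
    tsupport (oddBumpTensor b) ⊆ closedBall (0 : Euc 2) (√2 * b.rOut) := by
  refine closure_minimal (fun t ht => ?_) isClosed_closedBall
  have h0 : |t 0| < b.rOut := by
    by_contra! h
    exact ht (by simp [oddBumpTensor, oddBump_eq_zero b h])
  have h1 : |t 1| < b.rOut := by
    by_contra! h
    exact ht (by simp [oddBumpTensor, oddBump_eq_zero b h])
  rw [mem_closedBall_zero_iff, EuclideanSpace.norm_eq, Fin.sum_univ_two,
    ← Real.sqrt_sq b.rOut_pos.le, ← Real.sqrt_mul (by norm_num)]
  refine Real.sqrt_le_sqrt ?_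
  simp only [Real.norm_eq_abs]
  nlinarith [abs_nonneg (t 0), abs_nonneg (t 1)]

theorem cancelCond_oddBumpTensor (b : ContDiffBump (0 : ℝ)) (μ : Fin 2) :
    CancelCond eProd μ (oddBumpTensor b) := by
  intro t
  refine self_eq_neg.mp ?_
  rw [← integral_neg]
  nth_rw 1 [← integral_neg_eq_self]
  congr 1
  ext s
  fin_cases μ <;> simp only [oddBumpTensor, eProd] <;> simp
  · exact (congrArg (· * oddBump b (t 1)) (oddBump_neg b _)).trans (neg_mul _ _)
  · exact (congrArg (oddBump b (t 0) * ·) (oddBump_neg b _)).trans (mul_neg _ _)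

theorem cancelCond_zero {d l : ℕ} (e : Fin d → Fin l → ℝ) (μ : Fin l) :
    CancelCond e μ (0 : Euc d → ℝ) := by
  intro t
  simp

theorem isKernelSeq_blockKernel {a : ℝ} (b : ContDiffBump (0 : ℝ))
    (hb : √2 * b.rOut < a) : IsKernelSeq eProd a (blockKernel b) := by
  refine ⟨fun k => ?_, fun k => ?_, fun r => ?_, fun k μ _ => ?_⟩
  · unfold blockKernel
    split_ifs
    · exact contDiff_oddBumpTensor b
    · exact contDiff_const
  · unfold blockKernel
    split_ifs
    · exact (tsupport_oddBumpTensor_subset b).trans (closedBall_subset_ball hb)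
    · simp [tsupport]
  · refine ⟨max (CmSupNorm r (oddBumpTensor b)) (CmSupNorm r (0 : Euc 2 → ℝ)), fun k => ?_⟩
    unfold blockKernel
    split_ifs
    · exact le_max_left _ _
    · exact le_max_right _ _
  · unfold blockKernel
    split_ifs
    · exact cancelCond_oddBumpTensor b μ
    · exact cancelCond_zero _ μ

/-! ### Index bookkeeping -/

theorem mem_trunc {d M : ℕ} {k : Fin d → ℕ} : k ∈ trunc d M ↔ ∀ μ, k μ ≤ M := by
  simp only [trunc, Finset.mem_image, Finset.mem_univ, true_and]
  constructor
  · rintro ⟨k, rfl⟩ μ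
    exact Nat.lt_succ_iff.mp (k μ).2
  · exact fun h => ⟨fun μ => ⟨k μ, Nat.lt_succ_iff.mpr (h μ)⟩, rfl⟩

/-- Two cubic truncations of a sum over the dyadic blocks differ by a single block. -/
theorem sum_trunc_sub_sum_trunc {E : Type*} [AddCommGroup E] (S : (Fin 2 → ℕ) → E)
    (hS : ∀ k, ¬ IsDyadicBlockIndex k → S k = 0) (j : ℕ) :
    ∑ k ∈ trunc 2 (7 * 2 ^ j), S k - ∑ k ∈ trunc 2 (6 * 2 ^ j - 1), S k =
      ∑ i ∈ Finset.range (2 ^ j + 1), S ![6 * 2 ^ j + i, 6 * 2 ^ j - i] := by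
  have hpos : 0 < 2 ^ j := by positivity
  rw [← Finset.sum_sdiff_eq_sub]
  swap
  · intro k hk
    rw [mem_trunc] at hk ⊢
    intro μ
    have := hk μ
    omega
  rw [← Finset.sum_image (f := S) (g := fun i => ![6 * 2 ^ j + i, 6 * 2 ^ j - i])]
  swap
  · intro i _ i' _ h
    have := congrFun h 0
    simp only [Matrix.cons_val_zero] at this
    omega
  refine (Finset.sum_subset ?_ ?_).symm
  · intro k hk
    obtain ⟨i, hi, rfl⟩ := Finset.mem_image.mp hk
    rw [Finset.mem_range] at hi
    simp only [Finset.mem_sdiff, mem_trunc, Fin.forall_fin_two, Matrix.cons_val_zero,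
      Matrix.cons_val_one]
    omega
  · intro k hk hk'
    refine hS k ?_
    rintro ⟨j', hsum, hl, hu⟩
    simp only [Finset.mem_sdiff, mem_trunc, Fin.forall_fin_two] at hk
    have hjj : j' = j := by
      rcases lt_trichotomy j' j with h | h | h
      · have := Nat.pow_le_pow_right (n := 2) (by norm_num) (Nat.succ_le_of_lt h)
        rw [Nat.pow_succ] at this
        omega
      · exact h
      · have := Nat.pow_le_pow_right (n := 2) (by norm_num) (Nat.succ_le_of_lt h)
        rw [Nat.pow_succ] at this
        omega
    subst hjj
    refine hk' (Finset.mem_image.mpr ⟨k 0 - 6 * 2 ^ j', ?_, ?_⟩)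
    · rw [Finset.mem_range]
      omega
    · ext μ
      fin_cases μ <;> simp <;> omega

/-! ### Changes of variables -/

theorem scaled_eProd (ς : Euc 2 → ℝ) (δ : Fin 2 → ℝ) (t : Euc 2) :
    scaled eProd ς δ t = δ 0 * δ 1 * ς (WithLp.toLp 2 ![δ 0 * t 0, δ 1 * t 1]) := by
  have h : ∀ i, dpow δ (eProd i) = δ i := by
    intro i
    fin_cases i <;> simp [dpow, eProd]
  have hd : dilate eProd δ t = WithLp.toLp 2 ![δ 0 * t 0, δ 1 * t 1] := by
    ext i
    fin_cases i <;> simp [dilate, h]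
  rw [scaled, hd, Fin.prod_univ_two, h, h]

/-- Integration against a coordinatewise dilated density. -/
theorem integral_mul_comp_diagonal (H : ℝ → ℝ → ℝ) {r q : ℝ} (hr : 0 < r) (hq : 0 < q) :
    ∫ t : Euc 2, r * q * H (r * t 0) (q * t 1) = ∫ p : Fin 2 → ℝ, H (p 0) (p 1) := by
  have hdet : (Matrix.diagonal ![r, q]).det = r * q := by
    simp [Matrix.det_diagonal, Fin.prod_univ_two]
  have hne : (Matrix.diagonal ![r, q]).det ≠ 0 := by
    rw [hdet]
    positivity
  have hinj : Function.Injective (Matrix.toLin' (Matrix.diagonal ![r, q])) := by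
    intro x y hxy
    have h0 := congrFun hxy 0
    have h1 := congrFun hxy 1
    simp [Matrix.toLin'_apply, Matrix.mulVec_diagonal, hr.ne', hq.ne'] at h0 h1
    ext i
    fin_cases i <;> assumption
  have hemb : MeasurableEmbedding (Matrix.toLin' (Matrix.diagonal ![r, q])) :=
    (LinearMap.continuous_of_finiteDimensional _).measurableEmbedding hinj
  calc ∫ t : Euc 2, r * q * H (r * t 0) (q * t 1)
      = ∫ p : Fin 2 → ℝ, r * q * H (r * p 0) (q * p 1) :=
        (EuclideanSpace.volume_preserving_symm_measurableEquiv_toLp (Fin 2)).integral_comp'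
          fun p : Fin 2 → ℝ => r * q * H (r * p 0) (q * p 1)
    _ = ∫ p : Fin 2 → ℝ, H (p 0) (p 1) := by
        conv_rhs => rw [← Real.smul_map_diagonal_volume_pi hne]
        rw [integral_smul_measure, hemb.integral_map, hdet,
          ENNReal.toReal_ofReal (abs_nonneg _), abs_of_pos (by positivity), integral_const_mul]
        simp [Matrix.toLin'_apply, Matrix.mulVec_diagonal]

theorem eLpNorm_comp_mul_left {c : ℝ} (hc : 0 < c) (f : ℝ → ℝ) :
    eLpNorm (fun x => f (c * x)) 2 volume =
      ENNReal.ofReal |c⁻¹| ^ (1 / (2 : ℝ≥0∞)).toReal * eLpNorm f 2 volume := by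
  have hemb : MeasurableEmbedding fun x : ℝ => c * x := measurableEmbedding_mulLeft₀ hc.ne'
  have h := hemb.eLpNorm_map_measure (g := f) (p := 2) (μ := volume)
  rw [Real.map_volume_mul_left hc.ne', eLpNorm_smul_measure_of_ne_top (by norm_num),
    smul_eq_mul] at h
  exact h.symm

/-- An `L²` estimate for rescaled functions implies the same estimate before rescaling. -/
theorem eLpNorm_le_of_comp_mul_left {c : ℝ} (hc : 0 < c) {F g : ℝ → ℝ} {B : ℝ≥0∞}
    (h : eLpNorm (fun x => F (c * x)) 2 volume ≤ B * eLpNorm (fun x => g (c * x)) 2 volume) :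
    eLpNorm F 2 volume ≤ B * eLpNorm g 2 volume := by
  rw [eLpNorm_comp_mul_left hc, eLpNorm_comp_mul_left hc, mul_left_comm] at h
  have hc' : 0 < ENNReal.ofReal |c⁻¹| := ENNReal.ofReal_pos.mpr (by positivity)
  exact (ENNReal.mul_le_mul_iff_right
    (ENNReal.rpow_pos hc' ENNReal.ofReal_ne_top).ne'
    (ENNReal.rpow_ne_top_of_nonneg ENNReal.toReal_nonneg ENNReal.ofReal_ne_top)).mp h

/-! ### Rescaled averages along the curves `y - ε₁ u³ - ε₂ v³ - uv` -/

/-- The average of `g` along `y - ε₁ u³ - ε₂ v³ - uv` against the tensor product of odd bumps. -/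
def curveAverage (b : ContDiffBump (0 : ℝ)) (g : ℝ → ℝ) (y ε₁ ε₂ : ℝ) : ℝ :=
  ∫ p : Fin 2 → ℝ, g (y - ε₁ * p 0 ^ 3 - ε₂ * p 1 ^ 3 - p 0 * p 1) *
    (oddBump b (p 0) * oddBump b (p 1))

theorem integral_scaled_oddBumpTensor (b : ContDiffBump (0 : ℝ)) (g : ℝ → ℝ) (k : Fin 2 → ℕ)
    {m : ℕ} (hk : k 0 + k 1 = m) (x : ℝ) :
    ∫ t : Euc 2, g (2 ^ m * (x - t 0 ^ 3 - t 1 ^ 3 - t 0 * t 1)) *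
        scaled eProd (oddBumpTensor b) (twoPow k) t =
      curveAverage b g (2 ^ m * x) (2 ^ m / (2 ^ k 0) ^ 3) (2 ^ m / (2 ^ k 1) ^ 3) := by
  have hr : (0 : ℝ) < 2 ^ k 0 := by positivity
  have hq : (0 : ℝ) < 2 ^ k 1 := by positivity
  have hm : (2 : ℝ) ^ m = 2 ^ k 0 * 2 ^ k 1 := by rw [← hk, pow_add]
  rw [curveAverage, ← integral_mul_comp_diagonal (fun u v =>
    g (2 ^ m * x - 2 ^ m / (2 ^ k 0) ^ 3 * u ^ 3 - 2 ^ m / (2 ^ k 1) ^ 3 * v ^ 3 - u * v) *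
      (oddBump b u * oddBump b v)) hr hq]
  congr 1
  ext t
  have harg : (2 : ℝ) ^ m * (x - t 0 ^ 3 - t 1 ^ 3 - t 0 * t 1) =
      2 ^ m * x - 2 ^ m / (2 ^ k 0) ^ 3 * (2 ^ k 0 * t 0) ^ 3 -
        2 ^ m / (2 ^ k 1) ^ 3 * (2 ^ k 1 * t 1) ^ 3 - 2 ^ k 0 * t 0 * (2 ^ k 1 * t 1) := by
    rw [hm]
    field_simp
  rw [scaled_eProd, harg]
  simp only [twoPow, oddBumpTensor, Matrix.cons_val_zero, Matrix.cons_val_one]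
  ring

theorem continuous_oddBump_mul (b : ContDiffBump (0 : ℝ)) :
    Continuous fun p : Fin 2 → ℝ => oddBump b (p 0) * oddBump b (p 1) :=
  ((contDiff_oddBump b).continuous.comp (continuous_apply 0)).mul
    ((contDiff_oddBump b).continuous.comp (continuous_apply 1))

theorem integrable_oddBump_mul (b : ContDiffBump (0 : ℝ)) :
    Integrable fun p : Fin 2 → ℝ => oddBump b (p 0) * oddBump b (p 1) := by
  have h := (contDiff_oddBump b).continuous.integrable_of_hasCompactSupport (μ := volume)
    (hasCompactSupport_oddBump b)
  have hprod := Integrable.fintype_prod (ι := Fin 2) (f := fun _ => oddBump b)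
    (μ := fun _ => volume) fun _ => h
  simp only [Fin.prod_univ_two] at hprod
  exact hprod

theorem continuous_curveAverage (b : ContDiffBump (0 : ℝ)) {g : ℝ → ℝ} (hg : Continuous g)
    (hgc : HasCompactSupport g) :
    Continuous fun z : ℝ × ℝ × ℝ => curveAverage b g z.1 z.2.1 z.2.2 := by
  obtain ⟨C, hC⟩ := hgc.exists_bound_of_continuous hg
  have hb := continuous_oddBump_mul b
  unfold curveAverage
  refine continuous_of_dominated
    (bound := fun p => C * ‖oddBump b (p 0) * oddBump b (p 1)‖) (fun z => ?_) (fun z => ?_)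
    ((integrable_oddBump_mul b).norm.const_mul C) (ae_of_all _ fun p => by fun_prop)
  · exact ((hg.comp (by fun_prop)).mul hb).aestronglyMeasurable
  · refine ae_of_all _ fun p => ?_
    rw [norm_mul]
    exact mul_le_mul_of_nonneg_right (hC _) (norm_nonneg _)

theorem curveAverage_zero_pos (b B : ContDiffBump (0 : ℝ)) :
    0 < curveAverage b (fun w => -oddBump B w) 0 0 0 := by
  have hB := (contDiff_oddBump B).continuous
  obtain ⟨C, hC⟩ := (hasCompactSupport_oddBump B).exists_bound_of_continuous hB
  set u : ℝ := min (b.rOut / 2) (min (B.rOut / 2) 1) with hu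
  have hbo := b.rOut_pos
  have hBo := B.rOut_pos
  have hu0 : 0 < u := by positivity
  have hub : u < b.rOut := (min_le_left _ _).trans_lt (by linarith)
  have huB : u < B.rOut := ((min_le_right _ _).trans (min_le_left _ _)).trans_lt (by linarith)
  have hu1 : u ≤ 1 := (min_le_right _ _).trans (min_le_right _ _)
  have hneg : Continuous fun p : Fin 2 → ℝ =>
      -oddBump B (0 - 0 * p 0 ^ 3 - 0 * p 1 ^ 3 - p 0 * p 1) := by fun_prop
  refine integral_pos_of_integrable_nonneg_nonzero (x := fun _ => u)
    (hneg.mul (continuous_oddBump_mul b))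
    ((integrable_oddBump_mul b).bdd_mul (c := C) hneg.aestronglyMeasurable
      (ae_of_all _ fun p => by simpa using hC _)) (fun p => ?_) ?_
  · have h : -oddBump B (0 - 0 * p 0 ^ 3 - 0 * p 1 ^ 3 - p 0 * p 1) *
        (oddBump b (p 0) * oddBump b (p 1)) =
        (p 0 * p 1) ^ 2 * (B (p 0 * p 1) * (b (p 0) * b (p 1))) := by
      simp only [zero_mul, sub_zero, zero_sub, oddBump, B.neg]
      ring
    simp only [Pi.zero_apply]
    rw [h]
    exact mul_nonneg (sq_nonneg _) (mul_nonneg B.nonneg (mul_nonneg b.nonneg b.nonneg))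
  · have h1 : 0 < b u := b.pos_of_mem_ball (by simpa [abs_of_pos hu0] using hub)
    have h2 : 0 < B (u * u) := B.pos_of_mem_ball (by
      rw [mem_ball_zero_iff, Real.norm_eq_abs, abs_of_pos (by positivity)]
      nlinarith)
    simp only [zero_mul, sub_zero, zero_sub, oddBump, B.neg, neg_mul, neg_neg]
    positivity

/-! ### Unboundedness -/

/-- The operator term of index `k` in the partial sums attached to a kernel sequence. -/
def kernelTerm (ς : (Fin 2 → ℕ) → Euc 2 → ℝ) (f : ℝ → ℝ) (k : Fin 2 → ℕ) (x : ℝ) : ℝ :=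
  ∫ t : Euc 2, f (x - t 0 ^ 3 - t 1 ^ 3 - t 0 * t 1) * scaled eProd (ς k) (twoPow k) t

theorem stronglyMeasurable_kernelTerm {ς : (Fin 2 → ℕ) → Euc 2 → ℝ} {f : ℝ → ℝ}
    {k : Fin 2 → ℕ} (hς : Continuous (ς k)) (hf : Continuous f) :
    StronglyMeasurable (kernelTerm ς f k) := by
  have hs : Continuous (scaled eProd (ς k) (twoPow k)) := by
    rw [funext (scaled_eProd (ς k) (twoPow k))]
    refine continuous_const.mul (hς.comp ((PiLp.continuous_toLp 2 _).comp ?_))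
    refine continuous_pi fun i => ?_
    fin_cases i <;> simp <;> fun_prop
  have h : Continuous (Function.uncurry fun (x : ℝ) (t : Euc 2) =>
      f (x - t 0 ^ 3 - t 1 ^ 3 - t 0 * t 1) * scaled eProd (ς k) (twoPow k) t) := by
    unfold Function.uncurry
    fun_prop
  exact h.stronglyMeasurable.integral_prod_right

/-- Uniform bounds for the cubic partial sums bound the rescaled sum over each dyadic block. -/
theorem eLpNorm_sum_curveAverage_le (b : ContDiffBump (0 : ℝ)) {C : ℝ≥0}
    (hC : ∀ M : ℕ, ∀ f : ℝ → ℝ, ContDiff ℝ (⊤ : ℕ∞) f → HasCompactSupport f →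
      eLpNorm (fun x => ∑ k ∈ trunc 2 M, kernelTerm (blockKernel b) f k x) 2 volume ≤
        C * eLpNorm f 2 volume)
    {g : ℝ → ℝ} (hg : ContDiff ℝ (⊤ : ℕ∞) g) (hgc : HasCompactSupport g) (j : ℕ) :
    eLpNorm (fun y => ∑ i ∈ Finset.range (2 ^ j + 1), curveAverage b g y
        (2 ^ (12 * 2 ^ j) / (2 ^ (6 * 2 ^ j + i)) ^ 3)
        (2 ^ (12 * 2 ^ j) / (2 ^ (6 * 2 ^ j - i)) ^ 3)) 2 volume ≤
      (C + C) * eLpNorm g 2 volume := by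
  have hΛ : (0 : ℝ) < 2 ^ (12 * 2 ^ j) := by positivity
  refine eLpNorm_le_of_comp_mul_left hΛ ?_
  set f : ℝ → ℝ := fun x => g (2 ^ (12 * 2 ^ j) * x) with hf
  have hfd : ContDiff ℝ (⊤ : ℕ∞) f := hg.comp (contDiff_const.mul contDiff_id)
  have hfc : HasCompactSupport f :=
    hgc.comp_homeomorph (Homeomorph.mulLeft₀ _ hΛ.ne')
  have hmeas : ∀ M, AEStronglyMeasurable
      (fun x => ∑ k ∈ trunc 2 M, kernelTerm (blockKernel b) f k x) volume := by
    intro M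
    refine (Finset.stronglyMeasurable_fun_sum _ fun k _ => ?_).aestronglyMeasurable
    refine stronglyMeasurable_kernelTerm ?_ hfd.continuous
    unfold blockKernel
    split_ifs
    · exact (contDiff_oddBumpTensor b).continuous
    · exact continuous_const
  have hdiff : (fun x => ∑ i ∈ Finset.range (2 ^ j + 1), curveAverage b g (2 ^ (12 * 2 ^ j) * x)
        (2 ^ (12 * 2 ^ j) / (2 ^ (6 * 2 ^ j + i)) ^ 3)
        (2 ^ (12 * 2 ^ j) / (2 ^ (6 * 2 ^ j - i)) ^ 3)) =
      (fun x => ∑ k ∈ trunc 2 (7 * 2 ^ j), kernelTerm (blockKernel b) f k x) -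
        fun x => ∑ k ∈ trunc 2 (6 * 2 ^ j - 1), kernelTerm (blockKernel b) f k x := by
    ext x
    rw [Pi.sub_apply, sum_trunc_sub_sum_trunc (fun k => kernelTerm (blockKernel b) f k x)]
    · refine Finset.sum_congr rfl fun i hi => ?_
      rw [Finset.mem_range] at hi
      have hk : IsDyadicBlockIndex ![6 * 2 ^ j + i, 6 * 2 ^ j - i] :=
        ⟨j, by simp; omega, by simp, by simp; omega⟩
      rw [kernelTerm, blockKernel, if_pos hk, integral_scaled_oddBumpTensor]
      · simp
      · simp
        omega
    · intro k hk
      simp [kernelTerm, blockKernel, hk, scaled]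
  rw [hdiff, add_mul]
  exact (eLpNorm_sub_le (hmeas _) (hmeas _) (by norm_num)).trans
    (add_le_add (hC _ f hfd hfc) (hC _ f hfd hfc))

theorem two_pow_div_le {m k : ℕ} (hk : 5 * m ≤ k) :
    (2 : ℝ) ^ (12 * m) / (2 ^ k) ^ 3 ≤ (1 / 2) ^ m := by
  rw [div_le_iff₀ (by positivity), one_div_pow, one_div, ← pow_mul, inv_mul_eq_div,
    le_div_iff₀ (by positivity), ← pow_add]
  exact pow_le_pow_right₀ (by norm_num) (by omega)

/-- The rescaled sums over the dyadic blocks are eventually bounded below near the origin, with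
constants proportional to the size of the block. -/
theorem exists_lower_bound_sum_curveAverage (b : ContDiffBump (0 : ℝ)) {g : ℝ → ℝ}
    (hg : Continuous g) (hgc : HasCompactSupport g) (hpos : 0 < curveAverage b g 0 0 0) :
    ∃ c δ : ℝ, 0 < c ∧ 0 < δ ∧ ∀ᶠ j : ℕ in atTop, ∀ y ∈ ball (0 : ℝ) δ,
      2 ^ j * c ≤ ∑ i ∈ Finset.range (2 ^ j + 1), curveAverage b g y
        (2 ^ (12 * 2 ^ j) / (2 ^ (6 * 2 ^ j + i)) ^ 3)
        (2 ^ (12 * 2 ^ j) / (2 ^ (6 * 2 ^ j - i)) ^ 3) := by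
  set c := curveAverage b g 0 0 0 / 2 with hc
  have hev : ∀ᶠ z : ℝ × ℝ × ℝ in 𝓝 0, c < curveAverage b g z.1 z.2.1 z.2.2 :=
    (continuous_curveAverage b hg hgc).continuousAt.eventually
      (lt_mem_nhds (by simp only [hc, Prod.fst_zero, Prod.snd_zero]; linarith))
  obtain ⟨δ, hδ, hball⟩ := Metric.eventually_nhds_iff_ball.mp hev
  refine ⟨c, δ, by positivity, hδ, ?_⟩
  have hlim : Tendsto (fun j : ℕ => (1 / 2 : ℝ) ^ 2 ^ j) atTop (𝓝 0) :=
    (tendsto_pow_atTop_nhds_zero_of_lt_one (by norm_num) (by norm_num)).comp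
      (tendsto_pow_atTop_atTop_of_one_lt (by norm_num))
  filter_upwards [hlim.eventually (gt_mem_nhds hδ)] with j hj y hy
  have hsmall : ∀ k : ℕ, 5 * 2 ^ j ≤ k → |(2 : ℝ) ^ (12 * 2 ^ j) / (2 ^ k) ^ 3| < δ := by
    intro k hk
    rw [abs_of_nonneg (by positivity)]
    exact (two_pow_div_le hk).trans_lt hj
  have hterm : ∀ i ∈ Finset.range (2 ^ j + 1), c ≤ curveAverage b g y
      (2 ^ (12 * 2 ^ j) / (2 ^ (6 * 2 ^ j + i)) ^ 3)
      (2 ^ (12 * 2 ^ j) / (2 ^ (6 * 2 ^ j - i)) ^ 3) := by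
    intro i hi
    rw [Finset.mem_range] at hi
    refine (hball (y, _, _) ?_).le
    rw [mem_ball_zero_iff] at hy ⊢
    simp only [Prod.norm_def, max_lt_iff, Real.norm_eq_abs]
    exact ⟨hy, hsmall _ (by omega), hsmall _ (by omega)⟩
  have hsum := Finset.card_nsmul_le_sum _ _ _ hterm
  rw [Finset.card_range, nsmul_eq_mul] at hsum
  push_cast at hsum
  have : 0 < c := by positivity
  linarith

theorem not_uniformly_bounded_blockKernel (b : ContDiffBump (0 : ℝ)) (C : ℝ≥0) :
    ¬ ∀ M : ℕ, ∀ f : ℝ → ℝ, ContDiff ℝ (⊤ : ℕ∞) f → HasCompactSupport f →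
      eLpNorm (fun x => ∑ k ∈ trunc 2 M, kernelTerm (blockKernel b) f k x) 2 volume ≤
        C * eLpNorm f 2 volume := by
  intro hC
  have hg : ContDiff ℝ (⊤ : ℕ∞) fun w => -oddBump b w := (contDiff_oddBump b).neg
  have hgc : HasCompactSupport fun w => -oddBump b w := (hasCompactSupport_oddBump b).neg
  obtain ⟨c, δ, hc, hδ, hlow⟩ := exists_lower_bound_sum_curveAverage b hg.continuous hgc
    (curveAverage_zero_pos b b)
  set A : ℝ≥0∞ := (C + C) * eLpNorm (fun w => -oddBump b w) 2 volume with hA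
  have hAtop : A ≠ ∞ := ENNReal.mul_ne_top (by simp)
    (hg.continuous.memLp_of_hasCompactSupport hgc).eLpNorm_ne_top
  set V : ℝ≥0∞ := volume (ball (0 : ℝ) δ) ^ (1 / (2 : ℝ≥0∞).toReal) with hV
  have hV0 : V ≠ 0 := (ENNReal.rpow_pos (measure_ball_pos _ _ hδ) measure_ball_lt_top.ne).ne'
  have hVtop : V ≠ ∞ :=
    ENNReal.rpow_ne_top_of_nonneg (by positivity) measure_ball_lt_top.ne
  have hbound : ∀ᶠ j : ℕ in atTop, (2 : ℝ) ^ j * (c * V.toReal) ≤ A.toReal := by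
    filter_upwards [hlow] with j hj
    have h : eLpNorm ((ball (0 : ℝ) δ).indicator fun _ => (2 : ℝ) ^ j * c) 2 volume ≤ A := by
      refine le_trans (eLpNorm_mono fun y => ?_) (eLpNorm_sum_curveAverage_le b hC hg hgc j)
      by_cases hy : y ∈ ball (0 : ℝ) δ
      · rw [indicator_of_mem hy, Real.norm_eq_abs, abs_of_pos (by positivity)]
        exact (hj y hy).trans (le_abs_self _)
      · simp [indicator_of_notMem hy]
    rw [eLpNorm_indicator_const measurableSet_ball (by norm_num) (by norm_num)] at h
    have h' := ENNReal.toReal_mono hAtop h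
    rw [ENNReal.toReal_mul, toReal_enorm, Real.norm_eq_abs, abs_of_pos (by positivity)] at h'
    linarith
  have hlim : Tendsto (fun j : ℕ => (2 : ℝ) ^ j * (c * V.toReal)) atTop atTop :=
    (tendsto_pow_atTop_atTop_of_one_lt (by norm_num)).atTop_mul_const
      (mul_pos hc (ENNReal.toReal_pos hV0 hVtop))
  obtain ⟨j, hj, hj'⟩ := (hbound.and (hlim.eventually_gt_atTop A.toReal)).exists
  exact absurd hj hj'.not_ge

/-- Example 3.3: for every `a > 0` there is a product kernel
`K ∈ 𝒦(2,e,a,2)` such that `f ↦ ∫ f(x − s³ − t³ − st) K(s,t) ds dt` is unbounded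
on `L²(ℝ)`. -/
theorem statement_16 (a : ℝ) (ha : 0 < a) :
    ∃ ς : (Fin 2 → ℕ) → Euc 2 → ℝ, IsKernelSeq eProd a ς ∧
      ¬ ∃ C : ℝ≥0, ∀ M : ℕ, ∀ f : ℝ → ℝ, ContDiff ℝ (⊤ : ℕ∞) f → HasCompactSupport f →
        eLpNorm
          (fun x : ℝ => ∑ k ∈ trunc 2 M,
            ∫ t : Euc 2,
              f (x - t 0 ^ 3 - t 1 ^ 3 - t 0 * t 1) * scaled eProd (ς k) (twoPow k) t)
          2 volume ≤ C * eLpNorm f 2 volume := by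
  let b : ContDiffBump (0 : ℝ) := ⟨a / 4, a / 2, by linarith, by linarith⟩
  have hb : √2 * b.rOut < a := by
    have h : √2 < 2 := (Real.sqrt_lt' (by norm_num)).mpr (by norm_num)
    change √2 * (a / 2) < a
    nlinarith
  exact ⟨blockKernel b, isKernelSeq_blockKernel b hb,
    fun ⟨C, hC⟩ => not_uniformly_bounded_blockKernel b C hC⟩
end
end
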